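/- Let N ≥ 2 and let Ω ⊂ ℝ^N be a bounded Lipschitz domain. Let s₀ ∈ (0,1), and for each s ∈ (s₀,1) let u_s ∈ H^s(Ω) with ∫_Ω u_s dx = 0, and let ũ_s ∈ H^s_{Ω,0} be the s-minimal extension of u_s. Assume there exists C > 0 such that (1−s) ∬_{ℝ^{2N}\(Ω^c×Ω^c)} |ũ_s(x)−ũ_s(y)|²/|x−y|^{N+2s} dx dy ≤ C for every s ∈ (s₀,1). Then there exist an increasing sequence {s_k} ⊂ (s₀,1) with s_k → 1 and a function u ∈ H¹(Ω) with ∫_Ω u dx = 0 such that ‖u_{s_k} − u‖_{L²(Ω)} → 0 as k → ∞. -/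

import Mathlib

open MeasureTheory Filter Topology Bornology Set
open scoped ENNReal NNReal

noncomputable section

namespace FracNeumann

abbrev Euc (N : ℕ) : Type := EuclideanSpace ℝ (Fin N)

/-- The kernel weight `|x - y| ^ (N + 2s)`. -/
def kern (N : ℕ) (s : ℝ) (x y : Euc N) : ℝ := ‖x - y‖ ^ ((N : ℝ) + 2 * s)

/-- The region `ℝ^{2N} \ (Ω^c × Ω^c)`, where `Ω^c := ℝ^N \ closure Ω`. -/
def reg (N : ℕ) (Ω : Set (Euc N)) : Set (Euc N × Euc N) :=
  {q | q.1 ∈ closure Ω ∨ q.2 ∈ closure Ω}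

/-- The squared seminorm `[u]_{H^s_{Ω,0}}²`, as an extended real number. -/
def semiSq (N : ℕ) (s : ℝ) (Ω : Set (Euc N)) (u : Euc N → ℝ) : ℝ≥0∞ :=
  ∫⁻ q in reg N Ω, ENNReal.ofReal ((u q.1 - u q.2) ^ 2 / kern N s q.1 q.2)

/-- `∫_Ω u²`, as an extended real number. -/
def l2sq (N : ℕ) (Ω : Set (Euc N)) (u : Euc N → ℝ) : ℝ≥0∞ :=
  ∫⁻ x in Ω, ENNReal.ofReal ((u x) ^ 2)

/-- Membership in `H^s_{Ω,0}`. -/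
def memHs (N : ℕ) (s : ℝ) (Ω : Set (Euc N)) (u : Euc N → ℝ) : Prop :=
  Measurable u ∧ l2sq N Ω u < ⊤ ∧ semiSq N s Ω u < ⊤

/-- The squared Gagliardo seminorm `[u]_{H^s(Ω)}²`. -/
def semiSqOn (N : ℕ) (s : ℝ) (Ω : Set (Euc N)) (u : Euc N → ℝ) : ℝ≥0∞ :=
  ∫⁻ q in Ω ×ˢ Ω, ENNReal.ofReal ((u q.1 - u q.2) ^ 2 / kern N s q.1 q.2)

/-- Membership in `H^s(Ω)` (for functions defined on all of `ℝ^N`). -/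
def memHsOn (N : ℕ) (s : ℝ) (Ω : Set (Euc N)) (u : Euc N → ℝ) : Prop :=
  Measurable u ∧ l2sq N Ω u < ⊤ ∧ semiSqOn N s Ω u < ⊤

/-- The normalizing constant `c_{N,s}` of the fractional Laplacian. -/
def cNs (N : ℕ) (s : ℝ) : ℝ :=
  (4 : ℝ) ^ s * s * Real.Gamma ((N : ℝ) / 2 + s) /
    (Real.pi ^ ((N : ℝ) / 2) * Real.Gamma (1 - s))

/-- The nonlocal Neumann derivative `𝒩_s u`. -/
def Nneu (N : ℕ) (s : ℝ) (Ω : Set (Euc N)) (u : Euc N → ℝ) (x : Euc N) : ℝ :=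
  cNs N s * ∫ y in Ω, (u x - u y) / kern N s x y

/-- Membership in `H̃^s_{Ω,0}`: members of `H^s_{Ω,0}` with `𝒩_s u = 0` a.e. in `Ω^c`. -/
def memHsTilde (N : ℕ) (s : ℝ) (Ω : Set (Euc N)) (u : Euc N → ℝ) : Prop :=
  memHs N s Ω u ∧ ∀ᵐ x ∂(volume.restrict (closure Ω)ᶜ), Nneu N s Ω u x = 0

/-- The first nontrivial Neumann eigenvalue `μ₁^{(s)}(Ω)`. -/
def mu1 (N : ℕ) (s : ℝ) (Ω : Set (Euc N)) : ℝ :=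
  sInf {t : ℝ | ∃ u : Euc N → ℝ, memHs N s Ω u ∧ (∫ x in Ω, (u x) ^ 2) = 1 ∧
    (∫ x in Ω, u x) = 0 ∧ t = cNs N s / 2 * (semiSq N s Ω u).toReal}

/-- The bilinear form (without the constant). -/
def bform (N : ℕ) (s : ℝ) (Ω : Set (Euc N)) (u v : Euc N → ℝ) : ℝ :=
  ∫ q in reg N Ω, (u q.1 - u q.2) * (v q.1 - v q.2) / kern N s q.1 q.2

/-- First nontrivial eigenfunction: weak solution associated to `μ₁^{(s)}(Ω)`. -/
def IsFirstEigen (N : ℕ) (s : ℝ) (Ω : Set (Euc N)) (u : Euc N → ℝ) : Prop :=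
  memHs N s Ω u ∧ ¬ (u =ᵐ[volume.restrict Ω] 0) ∧ (∫ x in Ω, u x) = 0 ∧
    ∀ v : Euc N → ℝ, memHs N s Ω v →
      cNs N s / 2 * bform N s Ω u v = mu1 N s Ω * ∫ x in Ω, u x * v x

/-- Reflection `σ_e(x) = x - 2(x·e)e` across the hyperplane `{x·e = 0}`. -/
def reflect (N : ℕ) (e x : Euc N) : Euc N := x - (2 * (inner ℝ x e : ℝ)) • e

/-- The polarization `P_e u` with respect to the hyperplane `{x·e = 0}`. -/
def polarize (N : ℕ) (e : Euc N) (u : Euc N → ℝ) (x : Euc N) : ℝ :=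
  if 0 ≤ (inner ℝ x e : ℝ) then min (u x) (u (reflect N e x))
  else max (u x) (u (reflect N e x))

/-- Foliated Schwarz symmetry with respect to `p`. -/
def FoliatedSchwarz (N : ℕ) (p : Euc N) (u : Euc N → ℝ) : Prop :=
  ∃ uh : ℝ → ℝ → ℝ, (∀ r : ℝ, AntitoneOn (uh r) (Icc 0 Real.pi)) ∧
    ∀ x : Euc N, x ≠ 0 → u x = uh ‖x‖ (Real.arccos ((inner ℝ x p : ℝ) / ‖x‖))

/-- Radial symmetry (pointwise). -/
def Radial (N : ℕ) (u : Euc N → ℝ) : Prop := ∃ f : ℝ → ℝ, ∀ x, u x = f ‖x‖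

/-- Radial symmetry (a.e.). -/
def RadialAE (N : ℕ) (u : Euc N → ℝ) : Prop :=
  ∃ f : ℝ → ℝ, ∀ᵐ x : Euc N ∂volume, u x = f ‖x‖

/-- The set `{x ∈ Ω : u x ≠ 0}` has exactly two connected components. -/
def TwoNodal (N : ℕ) (Ω : Set (Euc N)) (u : Euc N → ℝ) : Prop :=
  Nat.card (ConnectedComponents {x : Euc N // x ∈ Ω ∧ u x ≠ 0}) = 2

/-- Bounded Lipschitz domain: open, bounded, connected, and near every boundary point the set
is the region above the graph of a Lipschitz function in some direction `e`. -/
def IsLipschitzDomain (N : ℕ) (Ω : Set (Euc N)) : Prop :=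
  IsOpen Ω ∧ IsBounded Ω ∧ IsConnected Ω ∧
    ∀ x ∈ frontier Ω, ∃ e : Euc N, ‖e‖ = 1 ∧ ∃ r : ℝ, 0 < r ∧
      ∃ (L : NNReal) (f : Euc N → ℝ), LipschitzWith L f ∧
        ∀ y ∈ Metric.ball x r,
          (y ∈ Ω ↔ f (y - ((inner ℝ y e : ℝ)) • e) < (inner ℝ y e : ℝ))

/-- `g` is a weak gradient of `u` in `Ω`, square-integrable on `Ω`. -/
def IsWeakGradient (N : ℕ) (Ω : Set (Euc N)) (u : Euc N → ℝ) (g : Euc N → Euc N) : Prop :=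
  Measurable g ∧ (∫⁻ x in Ω, ENNReal.ofReal (‖g x‖ ^ 2)) < ⊤ ∧
    ∀ φ : Euc N → ℝ, ContDiff ℝ (⊤ : ℕ∞) φ → HasCompactSupport φ → tsupport φ ⊆ Ω →
      ∀ i : Fin N, (∫ x in Ω, u x * fderiv ℝ φ x (EuclideanSpace.single i 1)) =
        - ∫ x in Ω, g x i * φ x

/-- Membership in `H¹(Ω)`. -/
def memH1 (N : ℕ) (Ω : Set (Euc N)) (u : Euc N → ℝ) : Prop :=
  Measurable u ∧ l2sq N Ω u < ⊤ ∧ ∃ g, IsWeakGradient N Ω u g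

/-- `∫_Ω |∇u|²`, as an extended real number. -/
def gradSq (N : ℕ) (Ω : Set (Euc N)) (u : Euc N → ℝ) : ℝ≥0∞ :=
  ⨅ (g : Euc N → Euc N) (_ : IsWeakGradient N Ω u g), ∫⁻ x in Ω, ENNReal.ofReal (‖g x‖ ^ 2)

/-- Rayleigh quotient for the fractional Neumann problem. -/
def rayleighS (N : ℕ) (s : ℝ) (Ω : Set (Euc N)) (u : Euc N → ℝ) : ℝ≥0∞ :=
  ENNReal.ofReal (cNs N s / 2) * semiSq N s Ω u / l2sq N Ω u

/-- Rayleigh quotient for the local Neumann problem. -/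
def rayleigh1 (N : ℕ) (Ω : Set (Euc N)) (u : Euc N → ℝ) : ℝ≥0∞ :=
  gradSq N Ω u / l2sq N Ω u

/-- The min-max value `μ_n^{(s)}(Ω)` over `n`-dimensional subspaces of `H^s_{Ω,0} ∩ L²₀(Ω)`. -/
def muNs (N : ℕ) (s : ℝ) (Ω : Set (Euc N)) (n : ℕ) : ℝ≥0∞ :=
  ⨅ (A : Submodule ℝ (Euc N → ℝ)) (_ : Module.finrank ℝ A = n ∧
      (∀ u ∈ A, memHs N s Ω u ∧ (∫ x in Ω, u x) = 0) ∧
      (∀ u ∈ A, u =ᵐ[(volume : Measure (Euc N))] 0 → u = 0)),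
    ⨆ (u : Euc N → ℝ) (_ : u ∈ A ∧ u ≠ 0), rayleighS N s Ω u

/-- The min-max value over `n`-dimensional subspaces of `H̃^s_{Ω,0} ∩ L²₀(Ω)`. -/
def muNsTilde (N : ℕ) (s : ℝ) (Ω : Set (Euc N)) (n : ℕ) : ℝ≥0∞ :=
  ⨅ (A : Submodule ℝ (Euc N → ℝ)) (_ : Module.finrank ℝ A = n ∧
      (∀ u ∈ A, memHsTilde N s Ω u ∧ (∫ x in Ω, u x) = 0) ∧
      (∀ u ∈ A, u =ᵐ[(volume : Measure (Euc N))] 0 → u = 0)),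
    ⨆ (u : Euc N → ℝ) (_ : u ∈ A ∧ u ≠ 0), rayleighS N s Ω u

/-- The min-max value `μ_n^{(1)}(Ω)` over `n`-dimensional subspaces of `H¹(Ω) ∩ L²₀(Ω)`. -/
def muN1 (N : ℕ) (Ω : Set (Euc N)) (n : ℕ) : ℝ≥0∞ :=
  ⨅ (A : Submodule ℝ (Euc N → ℝ)) (_ : Module.finrank ℝ A = n ∧
      (∀ u ∈ A, memH1 N Ω u ∧ (∫ x in Ω, u x) = 0) ∧
      (∀ u ∈ A, u =ᵐ[volume.restrict Ω] 0 → u = 0)),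
    ⨆ (u : Euc N → ℝ) (_ : u ∈ A ∧ u ≠ 0), rayleigh1 N Ω u

/-- `μ_n^{(s)}(Ω)` including `μ₀^{(s)}(Ω) := 0`. -/
def muNsFull (N : ℕ) (s : ℝ) (Ω : Set (Euc N)) (n : ℕ) : ℝ≥0∞ :=
  if n = 0 then 0 else muNs N s Ω n

/-- `μ_n^{(1)}(Ω)` including `μ₀^{(1)}(Ω) := 0`. -/
def muN1Full (N : ℕ) (Ω : Set (Euc N)) (n : ℕ) : ℝ≥0∞ :=
  if n = 0 then 0 else muN1 N Ω n

/-- The squared `H^s_{Ω,0}`-seminorm of the `s`-minimal extension of `u`: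
the minimal value of `[v]²` over `v ∈ H^s_{Ω,0}` with `v = u` a.e. in `Ω`. -/
def minExtSemiSq (N : ℕ) (s : ℝ) (Ω : Set (Euc N)) (u : Euc N → ℝ) : ℝ≥0∞ :=
  ⨅ (v : Euc N → ℝ) (_ : memHs N s Ω v ∧ v =ᵐ[volume.restrict Ω] u), semiSq N s Ω v

/-- `ω_{N-1}`: volume of the unit ball of `ℝ^{N-1}`. -/
def omegaPrev (N : ℕ) : ℝ := (volume (Metric.ball (0 : Euc (N - 1)) 1)).toReal

/-- Membership in `L²₀(Ω)`. -/
def memL20 (N : ℕ) (Ω : Set (Euc N)) (u : Euc N → ℝ) : Prop :=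
  Measurable u ∧ l2sq N Ω u < ⊤ ∧ (∫ x in Ω, u x) = 0

/-- The functional `F_s` (value `+∞` outside `H^s(Ω)`). -/
def Fs (N : ℕ) (s : ℝ) (Ω : Set (Euc N)) (u : Euc N → ℝ) : ℝ≥0∞ :=
  ENNReal.ofReal (1 - s) * minExtSemiSq N s Ω u

/-- The functional `F₁` (value `+∞` outside `H¹(Ω)`). -/
def F1 (N : ℕ) (Ω : Set (Euc N)) (u : Euc N → ℝ) : ℝ≥0∞ :=
  ENNReal.ofReal (omegaPrev N / (2 * N)) * gradSq N Ω u

end FracNeumann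

namespace FracNeumann

/-!
The midpoint inequality `|u(x) - u(y)|² ≤ 2 |u(x) - u(m)|² + 2 |u(m) - u(y)|²`, integrated over a
convex set, shows that `r ^ (-N - 2) ∬_{|x - y| < r} |u(x) - u(y)|²` does not decrease when `r` is
halved.  So, up to a constant, each of the first `1 / (1 - s)` dyadic scales below `r` contributes
as much to the Gagliardo energy as the scale `r` itself, and a bound on `(1 - s) [u_s]²` becomes
`∬_{|x - y| < r} |u_s(x) - u_s(y)|² ≲ r ^ (N + 2s)`, with a constant that does not depend on `s`.
At a boundary point a shear flattens the graph chart to a convex set, so the same bound holds there.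

Compactness: the averages of `u_s` over contracted copies of the domain lie at `L²`-distance `O(r)`
from `u_s`, and modulo constants they converge along any ultrafilter.  Hence `u_s` is Cauchy modulo
constants near every point of the closure, and connectedness makes the constants agree.

The limit inherits the estimate `∬_{|x - y| < r} ≲ r ^ (N + 2)`, so its difference quotients are
bounded in `L²` and the Riesz representation theorem yields the weak gradient.
-/

section Energies

variable {X : Type*} [MeasurableSpace X] {μ : Measure X}

/-- The unweighted double integral `∬_A |v(x) - v(y)|² dμ(x) dμ(y)` over a set `A` of pairs. -/
def diffEnergy (μ : Measure X) (A : Set (X × X)) (v : X → ℝ) : ℝ≥0∞ :=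
  ∫⁻ q in A, ENNReal.ofReal ((v q.1 - v q.2) ^ 2) ∂μ.prod μ

lemma diffEnergy_mono {A B : Set (X × X)} (h : A ⊆ B) (v : X → ℝ) :
    diffEnergy μ A v ≤ diffEnergy μ B v :=
  lintegral_mono_set h

lemma diffEnergy_union_le (A B : Set (X × X)) (v : X → ℝ) :
    diffEnergy μ (A ∪ B) v ≤ diffEnergy μ A v + diffEnergy μ B v :=
  lintegral_union_le _ A B

lemma ofReal_add_sq_le_two (a b : ℝ) :
    ENNReal.ofReal ((a + b) ^ 2) ≤ 2 * ENNReal.ofReal (a ^ 2) + 2 * ENNReal.ofReal (b ^ 2) := by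
  rw [← ENNReal.ofReal_ofNat, ← ENNReal.ofReal_mul zero_le_two, ← ENNReal.ofReal_mul zero_le_two,
    ← ENNReal.ofReal_add (by positivity) (by positivity)]
  exact ENNReal.ofReal_le_ofReal (by linarith [add_sq_le (a := a) (b := b)])

lemma ofReal_sub_sq_le_two (a b c : ℝ) : ENNReal.ofReal ((a - b) ^ 2) ≤
    2 * ENNReal.ofReal ((a - c) ^ 2) + 2 * ENNReal.ofReal ((b - c) ^ 2) := by
  simpa only [sub_add_sub_cancel, sub_sq_comm c b] using ofReal_add_sq_le_two (a - c) (c - b)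

lemma diffEnergy_sub_le {v w : X → ℝ} (hv : Measurable v) (A : Set (X × X)) :
    diffEnergy μ A (v - w) ≤ 2 * diffEnergy μ A v + 2 * diffEnergy μ A w := by
  rw [diffEnergy, diffEnergy, ← lintegral_const_mul _ (by fun_prop)]
  have hw : 2 * diffEnergy μ A w =
      ∫⁻ q in A, 2 * ENNReal.ofReal ((w q.1 - w q.2) ^ 2) ∂μ.prod μ :=
    (lintegral_const_mul' _ _ ENNReal.ofNat_ne_top).symm
  rw [hw, ← lintegral_add_left (by fun_prop)]
  refine lintegral_mono fun q => ?_
  have h := ofReal_sub_sq_le_two (v q.1 - v q.2) (w q.1 - w q.2) 0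
  rw [sub_zero, sub_zero] at h
  convert h using 3
  simp only [Pi.sub_apply]
  ring

end Energies

section MidpointDoubling

variable {E : Type*} [NormedAddCommGroup E] [MeasurableSpace E]

/-- The pairs of points at distance less than `r`. -/
def nearDiag (E : Type*) [NormedAddCommGroup E] (r : ℝ) : Set (E × E) := {q | ‖q.1 - q.2‖ < r}

lemma mem_nearDiag {E : Type*} [NormedAddCommGroup E] {r : ℝ} {q : E × E} :
    q ∈ nearDiag E r ↔ ‖q.1 - q.2‖ < r := Iff.rfl

lemma measurableSet_nearDiag [SecondCountableTopology E] [OpensMeasurableSpace E] (r : ℝ) :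
    MeasurableSet (nearDiag E r) :=
  (isOpen_lt (by fun_prop) continuous_const).measurableSet

variable [NormedSpace ℝ E]

/-- The Gagliardo energy `∬_A |v(x) - v(y)|² / |x - y|^{n + 2s}` over a set `A` of pairs,
where `n` is the dimension of the space. -/
def gagliardoEnergy (μ : Measure E) (s : ℝ) (A : Set (E × E)) (v : E → ℝ) : ℝ≥0∞ :=
  ∫⁻ q in A, ENNReal.ofReal
    ((v q.1 - v q.2) ^ 2 / ‖q.1 - q.2‖ ^ ((Module.finrank ℝ E : ℝ) + 2 * s)) ∂μ.prod μ

/-- A measurable set of pairs stable under swapping the two points and under replacing the second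
point by the midpoint, so that all dyadic subdivisions of a pair stay in the set. -/
structure MidpointStable (Z : Set (E × E)) : Prop where
  measurableSet : MeasurableSet Z
  swap_mem : ∀ x y, (x, y) ∈ Z → (y, x) ∈ Z
  midpoint_mem : ∀ x y, (x, y) ∈ Z → (x, midpoint ℝ x y) ∈ Z

lemma MidpointStable.prod_self {B : Set E} (hB : Convex ℝ B) (hBm : MeasurableSet B) :
    MidpointStable (B ×ˢ B) where
  measurableSet := hBm.prod hBm
  swap_mem _ _ h := ⟨h.2, h.1⟩
  midpoint_mem _ _ h := ⟨h.1, hB.midpoint_mem h.1 h.2⟩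

variable [FiniteDimensional ℝ E] [BorelSpace E] {μ : Measure E} [μ.IsAddHaarMeasure]

lemma lintegral_comp_add_smul (a : E) {c : ℝ} (hc : 0 < c) {h : E → ℝ≥0∞} (hh : Measurable h) :
    ∫⁻ y, h (a + c • y) ∂μ =
      ENNReal.ofReal ((c ^ Module.finrank ℝ E)⁻¹) * ∫⁻ y, h y ∂μ := by
  rw [← lintegral_map (f := fun y => h (a + y)) (by fun_prop) (measurable_const_smul c),
    Measure.map_addHaar_smul μ hc.ne', lintegral_smul_measure, lintegral_add_left_eq_self,
    abs_of_pos (by positivity), smul_eq_mul]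

lemma MidpointStable.setLIntegral_swap {Z : Set (E × E)} (hZ : MidpointStable Z) (r : ℝ)
    {F : E × E → ℝ≥0∞} (hF : Measurable F) :
    ∫⁻ q in Z ∩ nearDiag E r, F q.swap ∂μ.prod μ = ∫⁻ q in Z ∩ nearDiag E r, F q ∂μ.prod μ := by
  have hpre : Prod.swap ⁻¹' (Z ∩ nearDiag E r) = Z ∩ nearDiag E r := by
    ext ⟨x, y⟩
    simp only [mem_preimage, Prod.swap_prod_mk, mem_inter_iff, mem_nearDiag, norm_sub_rev y x]
    exact and_congr_left fun _ => ⟨hZ.swap_mem _ _, hZ.swap_mem _ _⟩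
  have hswap := (Measure.measurePreserving_swap (μ := μ) (ν := μ)).setLIntegral_comp_preimage
    (hZ.measurableSet.inter (measurableSet_nearDiag r)) hF
  rwa [hpre] at hswap

lemma MidpointStable.setLIntegral_midpoint_le {Z : Set (E × E)} (hZ : MidpointStable Z) (r : ℝ)
    {F : E × E → ℝ≥0∞} (hF : Measurable F) :
    ∫⁻ q in Z ∩ nearDiag E r, F (q.1, midpoint ℝ q.1 q.2) ∂μ.prod μ ≤
      2 ^ Module.finrank ℝ E * ∫⁻ q in Z ∩ nearDiag E (r / 2), F q ∂μ.prod μ := by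
  have hmid : ∀ x y : E, midpoint ℝ x y = (2⁻¹ : ℝ) • x + (2⁻¹ : ℝ) • y := fun x y => by
    rw [midpoint_eq_smul_add, smul_add, invOf_eq_inv]
  have hA : ∀ t, MeasurableSet (Z ∩ nearDiag E t) := fun t =>
    hZ.measurableSet.inter (measurableSet_nearDiag t)
  set G := (Z ∩ nearDiag E (r / 2)).indicator F with hG
  have hGm : Measurable G := hF.indicator (hA _)
  have hle : ∀ q ∈ Z ∩ nearDiag E r, F (q.1, midpoint ℝ q.1 q.2) ≤ G (q.1, midpoint ℝ q.1 q.2) := by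
    rintro ⟨x, y⟩ ⟨hq, hr⟩
    rw [hG, indicator_of_mem]
    refine ⟨hZ.midpoint_mem x y hq, ?_⟩
    rw [mem_nearDiag] at hr ⊢
    rw [← dist_eq_norm, dist_left_midpoint, dist_eq_norm, Real.norm_ofNat]
    linarith
  have hx : ∀ x : E, ∫⁻ y, G (x, midpoint ℝ x y) ∂μ =
      2 ^ Module.finrank ℝ E * ∫⁻ y, G (x, y) ∂μ := fun x => by
    simp only [hmid]
    rw [lintegral_comp_add_smul ((2⁻¹ : ℝ) • x) (c := 2⁻¹) (by norm_num) (h := fun y => G (x, y))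
      (by fun_prop), inv_pow, inv_inv, ENNReal.ofReal_pow zero_le_two, ENNReal.ofReal_ofNat]
  calc ∫⁻ q in Z ∩ nearDiag E r, F (q.1, midpoint ℝ q.1 q.2) ∂μ.prod μ
      ≤ ∫⁻ q, G (q.1, midpoint ℝ q.1 q.2) ∂μ.prod μ :=
        (setLIntegral_mono' (hA r) hle).trans (setLIntegral_le_lintegral _ _)
    _ = ∫⁻ x, ∫⁻ y, G (x, midpoint ℝ x y) ∂μ ∂μ :=
        lintegral_prod _ (by simp only [hmid]; fun_prop)
    _ = 2 ^ Module.finrank ℝ E * ∫⁻ x, ∫⁻ y, G (x, y) ∂μ ∂μ := by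
        simp only [hx]
        exact lintegral_const_mul _ hGm.lintegral_prod_right'
    _ = _ := by rw [← lintegral_prod _ hGm.aemeasurable, hG, lintegral_indicator (hA _)]

lemma MidpointStable.diffEnergy_le_half {Z : Set (E × E)} (hZ : MidpointStable Z) {v : E → ℝ}
    (hv : Measurable v) (r : ℝ) :
    diffEnergy μ (Z ∩ nearDiag E r) v ≤
      2 ^ (Module.finrank ℝ E + 2) * diffEnergy μ (Z ∩ nearDiag E (r / 2)) v := by
  have hmid : Continuous fun q : E × E => midpoint ℝ q.1 q.2 := by
    simp only [midpoint_eq_smul_add]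
    fun_prop
  set F : E × E → ℝ≥0∞ := fun q => ENNReal.ofReal ((v q.1 - v q.2) ^ 2)
  set G : E × E → ℝ≥0∞ := fun q => F (q.1, midpoint ℝ q.1 q.2)
  have hF : Measurable F := by fun_prop
  have hG : Measurable G := hF.comp (measurable_fst.prodMk hmid.measurable)
  have hswap : ∀ q : E × E, F (q.2, midpoint ℝ q.1 q.2) = G q.swap := fun q => by
    simp only [G, Prod.fst_swap, Prod.snd_swap, midpoint_comm q.2]
  calc diffEnergy μ (Z ∩ nearDiag E r) v
      ≤ ∫⁻ q in Z ∩ nearDiag E r, (2 * G q + 2 * G q.swap) ∂μ.prod μ :=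
        lintegral_mono fun q => by
          simpa only [← hswap] using ofReal_sub_sq_le_two (v q.1) (v q.2) (v (midpoint ℝ q.1 q.2))
    _ = 4 * ∫⁻ q in Z ∩ nearDiag E r, G q ∂μ.prod μ := by
        rw [lintegral_add_left (by fun_prop), lintegral_const_mul _ hG,
          lintegral_const_mul _ (by fun_prop), hZ.setLIntegral_swap r hG, ← add_mul]
        norm_num
    _ ≤ 4 * (2 ^ Module.finrank ℝ E * diffEnergy μ (Z ∩ nearDiag E (r / 2)) v) := by
        gcongr
        exact hZ.setLIntegral_midpoint_le r hF
    _ = _ := by rw [pow_add]; ring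

lemma MidpointStable.diffEnergy_le_dyadic {Z : Set (E × E)} (hZ : MidpointStable Z) {v : E → ℝ}
    (hv : Measurable v) (r : ℝ) (k : ℕ) :
    diffEnergy μ (Z ∩ nearDiag E r) v ≤
      (2 ^ (Module.finrank ℝ E + 2)) ^ k * diffEnergy μ (Z ∩ nearDiag E (r / 2 ^ k)) v := by
  induction k with
  | zero => simp only [pow_zero, one_mul, div_one, le_refl]
  | succ k ih =>
    refine ih.trans ?_
    rw [pow_succ (2 ^ (Module.finrank ℝ E + 2)), mul_assoc, pow_succ 2 k, ← div_div]
    gcongr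
    exact hZ.diffEnergy_le_half hv _

end MidpointDoubling

section DyadicEstimate

lemma sum_dyadic_rpow_neg_le {p r : ℝ} (hp : 1 ≤ p) (hr : 0 < r) (K : ℕ) :
    ∑ k ∈ Finset.range (K + 1), (r / 2 ^ k) ^ (-p) ≤ 2 * (r / 2 ^ K) ^ (-p) := by
  induction K with
  | zero =>
    have : 0 < r ^ (-p) := by positivity
    simp only [zero_add, Finset.range_one, Finset.sum_singleton, pow_zero, div_one]
    linarith
  | succ K ih =>
    have hstep : (r / 2 ^ (K + 1)) ^ (-p) = 2 ^ p * (r / 2 ^ K) ^ (-p) := by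
      rw [pow_succ, ← div_div, Real.div_rpow (by positivity) zero_le_two,
        Real.rpow_neg zero_le_two, div_inv_eq_mul, mul_comm]
    have htwo : (2 : ℝ) ≤ 2 ^ p := by
      simpa only [Real.rpow_one] using Real.rpow_le_rpow_of_exponent_le one_le_two hp
    have hpos : 0 < (r / 2 ^ K) ^ (-p) := by positivity
    rw [Finset.sum_range_succ, hstep]
    nlinarith

lemma sum_dyadic_rpow_neg_ite_le {p r d : ℝ} (hp : 1 ≤ p) (hr : 0 < r) (hd : 0 < d) (K : ℕ) :
    ∑ k ∈ Finset.range K, (if d < r / 2 ^ k then (r / 2 ^ k) ^ (-p) else 0) ≤ 2 * d ^ (-p) := by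
  induction K with
  | zero =>
    rw [Finset.sum_range_zero]
    positivity
  | succ K ih =>
    by_cases h : d < r / 2 ^ K
    · calc ∑ k ∈ Finset.range (K + 1), (if d < r / 2 ^ k then (r / 2 ^ k) ^ (-p) else 0)
          ≤ ∑ k ∈ Finset.range (K + 1), (r / 2 ^ k) ^ (-p) := by
            gcongr with k
            split_ifs
            · exact le_rfl
            · positivity
        _ ≤ 2 * (r / 2 ^ K) ^ (-p) := sum_dyadic_rpow_neg_le hp hr K
        _ ≤ 2 * d ^ (-p) := by
            gcongr 2 * ?_
            exact Real.rpow_le_rpow_of_nonpos hd h.le (by linarith)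
    · rwa [Finset.sum_range_succ, if_neg h, add_zero]

variable {E : Type*} [NormedAddCommGroup E] [NormedSpace ℝ E] [FiniteDimensional ℝ E]
  [MeasurableSpace E] [BorelSpace E] {μ : Measure E} {Z : Set (E × E)} {v : E → ℝ} {r s : ℝ}

lemma sum_dyadic_diffEnergy_le [Nontrivial E] (hv : Measurable v) (hr : 0 < r) (hs : 0 < s)
    (K : ℕ) :
    ∑ k ∈ Finset.range K, ENNReal.ofReal ((r / 2 ^ k) ^ (-(Module.finrank ℝ E + 2 * s))) *
      diffEnergy μ (Z ∩ nearDiag E (r / 2 ^ k)) v ≤ 2 * gagliardoEnergy μ s Z v := by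
  have hn : (1 : ℝ) ≤ Module.finrank ℝ E := by exact_mod_cast Module.finrank_pos
  set p : ℝ := Module.finrank ℝ E + 2 * s
  set g : ℕ → E × E → ℝ := fun k q =>
    (if ‖q.1 - q.2‖ < r / 2 ^ k then (r / 2 ^ k) ^ (-p) else 0) * (v q.1 - v q.2) ^ 2 with hg
  have hgm : ∀ k, Measurable (g k) := fun k =>
    (Measurable.ite (measurableSet_nearDiag _) measurable_const measurable_const).mul (by fun_prop)
  have hterm : ∀ k, ENNReal.ofReal ((r / 2 ^ k) ^ (-p)) *
      diffEnergy μ (Z ∩ nearDiag E (r / 2 ^ k)) v =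
        ∫⁻ q in Z, ENNReal.ofReal (g k q) ∂μ.prod μ := fun k => by
    rw [diffEnergy, ← lintegral_const_mul _ (by fun_prop), inter_comm,
      ← setLIntegral_indicator (measurableSet_nearDiag _)]
    refine lintegral_congr fun q => ?_
    by_cases hq : ‖q.1 - q.2‖ < r / 2 ^ k
    · rw [indicator_of_mem (mem_nearDiag.2 hq), hg]
      simp only [if_pos hq]
      rw [ENNReal.ofReal_mul (by positivity)]
    · rw [indicator_of_notMem (mt mem_nearDiag.1 hq), hg]
      simp only [if_neg hq, zero_mul, ENNReal.ofReal_zero]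
  have hsum : ∀ q : E × E, ∑ k ∈ Finset.range K, g k q ≤
      2 * ((v q.1 - v q.2) ^ 2 / ‖q.1 - q.2‖ ^ p) := fun q => by
    rcases eq_or_ne q.1 q.2 with hq | hq
    · simp only [hg, hq, sub_self, ne_eq, OfNat.ofNat_ne_zero, not_false_eq_true, zero_pow,
        mul_zero, Finset.sum_const_zero, zero_div, le_refl]
    · have hd : 0 < ‖q.1 - q.2‖ := norm_sub_pos_iff.2 hq
      rw [← Finset.sum_mul, div_eq_inv_mul, ← Real.rpow_neg hd.le, ← mul_assoc]
      gcongr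
      exact sum_dyadic_rpow_neg_ite_le (by linarith) hr hd K
  simp_rw [hterm]
  rw [← lintegral_finsetSum _ (fun k _ => (hgm k).ennreal_ofReal), gagliardoEnergy,
    ← lintegral_const_mul' _ _ ENNReal.ofNat_ne_top]
  refine lintegral_mono fun q => ?_
  rw [← ENNReal.ofReal_ofNat, ← ENNReal.ofReal_mul zero_le_two,
    ← ENNReal.ofReal_sum_of_nonneg (fun k _ => by positivity)]
  exact ENNReal.ofReal_le_ofReal (hsum q)

variable [μ.IsAddHaarMeasure]

-- Each halving of `r` costs `2 ^ (n + 2)` but the weight grows by `2 ^ (n + 2s)`: over at most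
-- `1 / (1 - s)` halvings the total loss is at most `4`.
lemma MidpointStable.weighted_diffEnergy_le (hZ : MidpointStable Z) (hv : Measurable v)
    (hr : 0 < r) {k : ℕ} (hk : k * (1 - s) ≤ 1) :
    ENNReal.ofReal (r ^ (-(Module.finrank ℝ E + 2 * s)) / 4) *
        diffEnergy μ (Z ∩ nearDiag E r) v ≤
      ENNReal.ofReal ((r / 2 ^ k) ^ (-(Module.finrank ℝ E + 2 * s))) *
        diffEnergy μ (Z ∩ nearDiag E (r / 2 ^ k)) v := by
  have hloss : ((2 : ℝ) ^ (Module.finrank ℝ E + 2)) ^ k ≤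
      4 * (2 ^ k) ^ (Module.finrank ℝ E + 2 * s : ℝ) := by
    rw [← pow_mul, ← Real.rpow_natCast, ← Real.rpow_natCast, ← Real.rpow_mul zero_le_two,
      show (4 : ℝ) = 2 ^ (2 : ℝ) by norm_num, ← Real.rpow_add zero_lt_two]
    refine Real.rpow_le_rpow_of_exponent_le one_le_two ?_
    push_cast
    nlinarith
  calc _ ≤ ENNReal.ofReal (r ^ (-(Module.finrank ℝ E + 2 * s : ℝ)) / 4) *
        ((2 ^ (Module.finrank ℝ E + 2)) ^ k * diffEnergy μ (Z ∩ nearDiag E (r / 2 ^ k)) v) := by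
        gcongr
        exact hZ.diffEnergy_le_dyadic hv r k
    _ = ENNReal.ofReal (r ^ (-(Module.finrank ℝ E + 2 * s : ℝ)) / 4 *
          (2 ^ (Module.finrank ℝ E + 2)) ^ k) * diffEnergy μ (Z ∩ nearDiag E (r / 2 ^ k)) v := by
        rw [← mul_assoc, ENNReal.ofReal_mul (by positivity), ENNReal.ofReal_pow (by positivity),
          ENNReal.ofReal_pow zero_le_two, ENNReal.ofReal_ofNat]
    _ ≤ _ := by
        gcongr
        rw [Real.div_rpow hr.le (by positivity), Real.rpow_neg (by positivity : (0 : ℝ) ≤ 2 ^ k),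
          div_inv_eq_mul, div_mul_eq_mul_div, mul_div_assoc]
        gcongr
        rw [div_le_iff₀ zero_lt_four, mul_comm]
        exact hloss

lemma MidpointStable.diffEnergy_le_gagliardoEnergy [Nontrivial E] (hZ : MidpointStable Z)
    (hv : Measurable v) (hr : 0 < r) (hs : s ∈ Ioo (0 : ℝ) 1) :
    diffEnergy μ (Z ∩ nearDiag E r) v ≤
      ENNReal.ofReal (8 * r ^ (Module.finrank ℝ E + 2 * s)) *
        (ENNReal.ofReal (1 - s) * gagliardoEnergy μ s Z v) := by
  set p : ℝ := Module.finrank ℝ E + 2 * s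
  set K : ℕ := ⌈1 / (1 - s)⌉₊
  have hs' : 0 < 1 - s := sub_pos.2 hs.2
  have hlow : ∀ k ∈ Finset.range K, ENNReal.ofReal (r ^ (-p) / 4) *
      diffEnergy μ (Z ∩ nearDiag E r) v ≤ ENNReal.ofReal ((r / 2 ^ k) ^ (-p)) *
        diffEnergy μ (Z ∩ nearDiag E (r / 2 ^ k)) v := fun k hk =>
    hZ.weighted_diffEnergy_le hv hr
      ((lt_div_iff₀ hs').1 (Nat.lt_ceil.1 (Finset.mem_range.1 hk))).le
  have hsum : ENNReal.ofReal (1 / (1 - s)) *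
      (ENNReal.ofReal (r ^ (-p) / 4) * diffEnergy μ (Z ∩ nearDiag E r) v) ≤
        2 * gagliardoEnergy μ s Z v :=
    calc _ ≤ (K : ℝ≥0∞) *
          (ENNReal.ofReal (r ^ (-p) / 4) * diffEnergy μ (Z ∩ nearDiag E r) v) := by
          gcongr
          rw [← ENNReal.ofReal_natCast]
          exact ENNReal.ofReal_le_ofReal (Nat.le_ceil _)
      _ ≤ _ := by
          simpa only [Finset.sum_const, Finset.card_range, nsmul_eq_mul]
            using Finset.sum_le_sum hlow
      _ ≤ _ := sum_dyadic_diffEnergy_le hv hr hs.1 K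
  have : 0 < r ^ p := by positivity
  have hconst : 4 * r ^ p * (1 - s) * (1 / (1 - s) * (r ^ (-p) / 4)) = 1 := by
    rw [Real.rpow_neg hr.le]
    field_simp
  calc diffEnergy μ (Z ∩ nearDiag E r) v = ENNReal.ofReal (4 * r ^ p * (1 - s)) *
        (ENNReal.ofReal (1 / (1 - s)) *
          (ENNReal.ofReal (r ^ (-p) / 4) * diffEnergy μ (Z ∩ nearDiag E r) v)) := by
        rw [← mul_assoc, ← mul_assoc, mul_assoc (ENNReal.ofReal _), ← ENNReal.ofReal_mul
          (by positivity), ← ENNReal.ofReal_mul (by positivity), hconst, ENNReal.ofReal_one,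
          one_mul]
    _ ≤ ENNReal.ofReal (4 * r ^ p * (1 - s)) * (2 * gagliardoEnergy μ s Z v) := by gcongr
    _ = _ := by
        rw [← mul_assoc, ← mul_assoc, ← ENNReal.ofReal_ofNat, ← ENNReal.ofReal_mul (by positivity),
          ← ENNReal.ofReal_mul (by positivity)]
        ring_nf

end DyadicEstimate

section ContractedAverages

lemma measure_univ_mul_average_sq_le {X : Type*} [MeasurableSpace X] {μ : Measure X}
    [IsFiniteMeasure μ] {f : X → ℝ} (hf : Integrable f μ) :
    μ univ * ENNReal.ofReal ((⨍ x, f x ∂μ) ^ 2) ≤ ∫⁻ x, ENNReal.ofReal (f x ^ 2) ∂μ := by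
  rcases eq_or_ne μ 0 with rfl | hμ
  · simp only [Measure.coe_zero, Pi.zero_apply, zero_mul, lintegral_zero_measure, le_refl]
  rcases eq_or_ne (∫⁻ x, ENNReal.ofReal (f x ^ 2) ∂μ) ⊤ with htop | htop
  · exact htop ▸ le_top
  have : NeZero μ := ⟨hμ⟩
  have hint : Integrable (fun x => f x ^ 2) μ :=
    ⟨hf.1.pow 2, by
      rw [hasFiniteIntegral_iff_ofReal (Eventually.of_forall fun x => sq_nonneg _)]
      exact htop.lt_top⟩
  have hjensen : (⨍ x, f x ∂μ) ^ 2 ≤ ⨍ x, f x ^ 2 ∂μ :=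
    (even_two.convexOn_pow (𝕜 := ℝ)).map_average_le (by fun_prop) isClosed_univ
      (Eventually.of_forall fun _ => mem_univ _) hf hint
  rw [← ofReal_integral_eq_lintegral_ofReal hint (Eventually.of_forall fun x => sq_nonneg _),
    ← measure_smul_average, smul_eq_mul, ENNReal.ofReal_mul measureReal_nonneg, ofReal_measureReal]
  gcongr

variable {E : Type*} [NormedAddCommGroup E] [NormedSpace ℝ E] [MeasurableSpace E]

/-- The average of `f` over the copy of `B` contracted by the factor `δ` towards the point `y`. -/
def contractedAverage (μ : Measure E) (B : Set E) (δ : ℝ) (y : E) (f : E → ℝ) : ℝ :=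
  ⨍ z in B, f ((1 - δ) • y + δ • z) ∂μ

variable [FiniteDimensional ℝ E] [BorelSpace E] {μ : Measure E} [μ.IsAddHaarMeasure]
  {B T : Set E} {δ : ℝ} {f : E → ℝ}

lemma integrableOn_comp_contraction (hB : MeasurableSet B) (hT : MeasurableSet T) (hδ : 0 < δ)
    {y : E} (hBT : ∀ z ∈ B, (1 - δ) • y + δ • z ∈ T) (hf : IntegrableOn f T μ) :
    IntegrableOn (fun z => f ((1 - δ) • y + δ • z)) B μ := by
  have hcomp := (((integrable_indicator_iff hT).2 hf).comp_add_left ((1 - δ) • y)).comp_smul hδ.ne'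
  refine (hcomp.integrableOn (s := B)).congr_fun (fun z hz => ?_) hB
  exact indicator_of_mem (hBT z hz) f

lemma contractedAverage_sub (hB : MeasurableSet B) (hT : MeasurableSet T) (hδ : 0 < δ)
    {y : E} (hBT : ∀ z ∈ B, (1 - δ) • y + δ • z ∈ T) {g : E → ℝ} (hf : IntegrableOn f T μ)
    (hg : IntegrableOn g T μ) :
    contractedAverage μ B δ y (f - g) =
      contractedAverage μ B δ y f - contractedAverage μ B δ y g := by
  simp only [contractedAverage, setAverage_eq, Pi.sub_apply]
  rw [integral_sub (integrableOn_comp_contraction hB hT hδ hBT hf)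
    (integrableOn_comp_contraction hB hT hδ hBT hg), smul_sub]

lemma measure_mul_sub_contractedAverage_sq_le (hB : MeasurableSet B) (hBfin : μ B ≠ ⊤)
    (hT : MeasurableSet T) (hδ : 0 < δ) {y : E} (hBT : ∀ z ∈ B, (1 - δ) • y + δ • z ∈ T)
    (hfm : Measurable f) (hf : IntegrableOn f T μ) (c : ℝ) :
    μ B * ENNReal.ofReal ((c - contractedAverage μ B δ y f) ^ 2) ≤
      ENNReal.ofReal ((δ ^ Module.finrank ℝ E)⁻¹) *
        ∫⁻ z in T, ENNReal.ofReal ((c - f z) ^ 2) ∂μ := by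
  have : IsFiniteMeasure (μ.restrict B) := ⟨by simpa only [Measure.restrict_apply_univ]
    using hBfin.lt_top⟩
  rcases eq_or_ne (μ B) 0 with hB0 | hB0
  · simp only [hB0, zero_mul, zero_le]
  have : NeZero (μ.restrict B) := ⟨by simpa only [ne_eq, Measure.restrict_eq_zero] using hB0⟩
  have hint := integrableOn_comp_contraction hB hT hδ hBT hf
  have hsub : ⨍ z in B, (c - f ((1 - δ) • y + δ • z)) ∂μ = c - contractedAverage μ B δ y f := by
    rw [contractedAverage, setAverage_eq, setAverage_eq, integral_sub (integrable_const c) hint,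
      smul_sub, ← setAverage_eq, average_const]
  set G : E → ℝ≥0∞ := T.indicator fun z => ENNReal.ofReal ((c - f z) ^ 2) with hG
  have hGm : Measurable G := (by fun_prop : Measurable _).indicator hT
  calc μ B * ENNReal.ofReal ((c - contractedAverage μ B δ y f) ^ 2)
      ≤ ∫⁻ z in B, ENNReal.ofReal ((c - f ((1 - δ) • y + δ • z)) ^ 2) ∂μ := by
        rw [← hsub, ← Measure.restrict_apply_univ (μ := μ) B]
        exact measure_univ_mul_average_sq_le ((integrable_const c).sub hint)
    _ ≤ ∫⁻ z, G ((1 - δ) • y + δ • z) ∂μ := by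
        refine (setLIntegral_mono' hB fun z hz => ?_).trans (setLIntegral_le_lintegral B _)
        rw [hG, indicator_of_mem (hBT z hz)]
    _ = _ := by rw [lintegral_comp_add_smul _ hδ hGm, hG, lintegral_indicator hT]

end ContractedAverages

section CoarseGraining

variable {X : Type*} [MeasurableSpace X] {ν : Measure X} [SFinite ν]

lemma diffEnergy_eq_lintegral_section {A : Set (X × X)} (hA : MeasurableSet A) {f : X → ℝ}
    (hf : Measurable f) :
    diffEnergy ν A f = ∫⁻ x, ∫⁻ y in Prod.mk x ⁻¹' A, ENNReal.ofReal ((f x - f y) ^ 2) ∂ν ∂ν := by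
  have hind : Measurable (A.indicator fun q => ENNReal.ofReal ((f q.1 - f q.2) ^ 2)) :=
    (by fun_prop : Measurable _).indicator hA
  rw [diffEnergy, ← lintegral_indicator hA, lintegral_prod _ hind.aemeasurable]
  refine lintegral_congr fun x => ?_
  rw [← lintegral_indicator (measurable_prodMk_left hA)]
  rfl

lemma diffEnergy_prod (B D : Set X) {f : X → ℝ} (hf : Measurable f) :
    diffEnergy ν (B ×ˢ D) f =
      ∫⁻ x in B, ∫⁻ y in D, ENNReal.ofReal ((f x - f y) ^ 2) ∂ν ∂ν := by
  rw [diffEnergy, ← Measure.prod_restrict, lintegral_prod _ (by fun_prop)]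

variable {E : Type*} [NormedAddCommGroup E] [NormedSpace ℝ E] [FiniteDimensional ℝ E]
  [MeasurableSpace E] [BorelSpace E] {μ : Measure E} [μ.IsAddHaarMeasure]
  {B : Set E} {δ ρ : ℝ} {f : E → ℝ}

lemma measure_mul_lintegral_sub_contractedAverage_sq_le (hB : MeasurableSet B) (hBfin : μ B ≠ ⊤)
    (hδ : 0 < δ) (j : SimpleFunc E E)
    (hj : ∀ x ∈ B, ∀ z ∈ B, (1 - δ) • j x + δ • z ∈ B ∧ ‖x - ((1 - δ) • j x + δ • z)‖ < ρ)
    (hfm : Measurable f) (hf : IntegrableOn f B μ) :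
    μ B * ∫⁻ x in B, ENNReal.ofReal ((f x - contractedAverage μ B δ (j x) f) ^ 2) ∂μ ≤
      ENNReal.ofReal ((δ ^ Module.finrank ℝ E)⁻¹) * diffEnergy μ (B ×ˢ B ∩ nearDiag E ρ) f := by
  have hA : MeasurableSet (B ×ˢ B ∩ nearDiag E ρ) := (hB.prod hB).inter (measurableSet_nearDiag ρ)
  rw [diffEnergy_eq_lintegral_section hA hfm, ← lintegral_const_mul' _ _ hBfin,
    ← lintegral_const_mul' _ _ ENNReal.ofReal_ne_top]
  refine (setLIntegral_mono' hB fun x hx => ?_).trans (setLIntegral_le_lintegral B _)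
  exact measure_mul_sub_contractedAverage_sq_le hB hBfin (measurable_prodMk_left hA) hδ
    (fun z hz => ⟨⟨hx, (hj x hx z hz).1⟩, (hj x hx z hz).2⟩) hfm
    (hf.mono_set fun _ hz => hz.1.2) (f x)

lemma contractedAverage_sub_sq_le (hB : Convex ℝ B) (hBm : MeasurableSet B) (hBfin : μ B ≠ ⊤)
    (hδ : δ ∈ Ioc (0 : ℝ) 1) (hfm : Measurable f) (hf : IntegrableOn f B μ) {x y : E}
    (hx : x ∈ B) (hy : y ∈ B) :
    μ B * (μ B * ENNReal.ofReal
        ((contractedAverage μ B δ x f - contractedAverage μ B δ y f) ^ 2)) ≤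
      ENNReal.ofReal ((δ ^ Module.finrank ℝ E)⁻¹) *
        (ENNReal.ofReal ((δ ^ Module.finrank ℝ E)⁻¹) * diffEnergy μ (B ×ˢ B) f) := by
  have hcontr : ∀ y ∈ B, ∀ z ∈ B, (1 - δ) • y + δ • z ∈ B := fun y hy z hz =>
    hB hy hz (sub_nonneg.2 hδ.2) hδ.1.le (sub_add_cancel 1 δ)
  have hle : ∀ y ∈ B, ∀ c, μ B * ENNReal.ofReal ((c - contractedAverage μ B δ y f) ^ 2) ≤
      ENNReal.ofReal ((δ ^ Module.finrank ℝ E)⁻¹) *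
        ∫⁻ z in B, ENNReal.ofReal ((c - f z) ^ 2) ∂μ := fun y hy =>
    measure_mul_sub_contractedAverage_sq_le hBm hBfin hBm hδ.1 (hcontr y hy) hfm hf
  set κ := ENNReal.ofReal ((δ ^ Module.finrank ℝ E)⁻¹)
  calc _ ≤ μ B * (κ * ∫⁻ z in B, ENNReal.ofReal ((f z - contractedAverage μ B δ x f) ^ 2) ∂μ) := by
        gcongr μ B * ?_
        simp only [sub_sq_comm _ (contractedAverage μ B δ x f)]
        exact hle y hy _
    _ = κ * ∫⁻ z in B, μ B * ENNReal.ofReal ((f z - contractedAverage μ B δ x f) ^ 2) ∂μ := by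
        rw [lintegral_const_mul' _ _ hBfin, mul_left_comm]
    _ ≤ κ * ∫⁻ z in B, κ * ∫⁻ w in B, ENNReal.ofReal ((f z - f w) ^ 2) ∂μ ∂μ := by
        gcongr κ * ?_
        exact lintegral_mono fun z => hle x hx (f z)
    _ = κ * (κ * diffEnergy μ (B ×ˢ B) f) := by
        rw [lintegral_const_mul' _ _ ENNReal.ofReal_ne_top, diffEnergy_prod B B hfm]

lemma ofReal_add_add_sq_le_three (a b c : ℝ) :
    ENNReal.ofReal ((a + b + c) ^ 2) ≤ 3 * ENNReal.ofReal (a ^ 2) + 3 * ENNReal.ofReal (b ^ 2) +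
      3 * ENNReal.ofReal (c ^ 2) := by
  rw [← ENNReal.ofReal_ofNat, ← ENNReal.ofReal_mul zero_le_three,
    ← ENNReal.ofReal_mul zero_le_three, ← ENNReal.ofReal_mul zero_le_three,
    ← ENNReal.ofReal_add (by positivity) (by positivity),
    ← ENNReal.ofReal_add (by positivity) (by positivity)]
  exact ENNReal.ofReal_le_ofReal
    (by linarith [sq_nonneg (a - b), sq_nonneg (a - c), sq_nonneg (b - c)])

lemma diffEnergy_le_approx_add_sum (B : Set X) {Y : Type*}
    (j : SimpleFunc X Y) (a : Y → ℝ) {f : X → ℝ} (hf : Measurable f) :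
    diffEnergy ν (B ×ˢ B) f ≤
      6 * (ν B * ∫⁻ x in B, ENNReal.ofReal ((f x - a (j x)) ^ 2) ∂ν) +
        3 * (ν B * (ν B * ∑ y ∈ j.range, ∑ z ∈ j.range, ENNReal.ofReal ((a y - a z) ^ 2))) := by
  have ha : Measurable fun x => a (j x) := (j.map a).measurable
  set d : X → ℝ≥0∞ := fun x => ENNReal.ofReal ((f x - a (j x)) ^ 2)
  have hd : Measurable d := ((hf.sub ha).pow_const 2).ennreal_ofReal
  set S := ∑ y ∈ j.range, ∑ z ∈ j.range, ENNReal.ofReal ((a y - a z) ^ 2)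
  have hle : ∀ x y, ENNReal.ofReal ((f x - f y) ^ 2) ≤ 3 * d x + 3 * S + 3 * d y := fun x y => by
    have hS : ENNReal.ofReal ((a (j x) - a (j y)) ^ 2) ≤ S :=
      (Finset.single_le_sum (f := fun z => ENNReal.ofReal ((a (j x) - a z) ^ 2))
        (fun _ _ => zero_le) (j.mem_range_self y)).trans
      (Finset.single_le_sum (f := fun y => ∑ z ∈ j.range, ENNReal.ofReal ((a y - a z) ^ 2))
        (fun _ _ => zero_le) (j.mem_range_self x))
    have h3 := ofReal_add_add_sq_le_three (f x - a (j x)) (a (j x) - a (j y)) (a (j y) - f y)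
    rw [sub_add_sub_cancel, sub_add_sub_cancel, sub_sq_comm (a (j y)) (f y)] at h3
    exact h3.trans (by gcongr)
  calc diffEnergy ν (B ×ˢ B) f
      ≤ ∫⁻ x in B, ∫⁻ y in B, (3 * d x + 3 * S + 3 * d y) ∂ν ∂ν := by
        rw [diffEnergy_prod B B hf]
        exact lintegral_mono fun x => lintegral_mono fun y => hle x y
    _ = ∫⁻ x in B, ((3 * d x + 3 * S) * ν B + 3 * ∫⁻ y in B, d y ∂ν) ∂ν := by
        refine lintegral_congr fun x => ?_
        rw [lintegral_add_left measurable_const, setLIntegral_const, lintegral_const_mul _ hd]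
    _ = (3 * ∫⁻ x in B, d x ∂ν + 3 * S * ν B) * ν B + 3 * (∫⁻ y in B, d y ∂ν) * ν B := by
        rw [lintegral_add_left (by fun_prop), lintegral_mul_const _ (by fun_prop),
          lintegral_add_left (by fun_prop), lintegral_const_mul _ hd, setLIntegral_const,
          setLIntegral_const]
    _ = _ := by ring

end CoarseGraining

section CauchyModuloConstants

/-- The family `u` is Cauchy along `𝓕` in `L²(V)` modulo constants: the double integral
`∬_{V × V}` of the squared differences of `u i - u j` tends to zero. -/
def CauchyModConst {ι X : Type*} [MeasurableSpace X] (𝓕 : Filter ι) (μ : Measure X)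
    (u : ι → X → ℝ) (V : Set X) : Prop :=
  Tendsto (fun p : ι × ι => diffEnergy μ (V ×ˢ V) (u p.1 - u p.2)) (𝓕 ×ˢ 𝓕) (𝓝 0)

lemma tendsto_ofReal_sub_sq_of_bounded {ι : Type*} (𝓕 : Ultrafilter ι) {a : ι → ℝ} {K : ℝ≥0∞}
    (hK : K ≠ ⊤) (ha : ∀ i, ENNReal.ofReal (a i ^ 2) ≤ K) :
    Tendsto (fun p : ι × ι => ENNReal.ofReal ((a p.1 - a p.2) ^ 2))
      ((𝓕 : Filter ι) ×ˢ (𝓕 : Filter ι)) (𝓝 0) := by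
  have hmem : Icc (-√K.toReal) (√K.toReal) ∈ 𝓕.map a := by
    rw [Ultrafilter.mem_map]
    refine Filter.univ_mem' fun i => abs_le.1 (Real.abs_le_sqrt ?_)
    exact (ENNReal.ofReal_le_iff_le_toReal hK).1 (ha i)
  obtain ⟨l, -, hl⟩ := isCompact_Icc.ultrafilter_le_nhds' _ hmem
  have hl : Tendsto a 𝓕 (𝓝 l) := hl
  have hsub := ((hl.comp tendsto_fst).sub (hl.comp tendsto_snd)).pow 2
  rw [sub_self, zero_pow two_ne_zero] at hsub
  simpa only [ENNReal.ofReal_zero, Function.comp_apply] using ENNReal.tendsto_ofReal hsub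

lemma exists_simpleFunc_dist_lt {X : Type*} [PseudoMetricSpace X] [MeasurableSpace X]
    [OpensMeasurableSpace X] {B : Set X} (hB : TotallyBounded B) (hne : B.Nonempty) {δ : ℝ}
    (hδ : 0 < δ) : ∃ j : SimpleFunc X X, (∀ x, j x ∈ B) ∧ ∀ x ∈ B, dist (j x) x < δ := by
  obtain ⟨t, htB, htfin, hcover⟩ := Metric.finite_approx_of_totallyBounded hB δ hδ
  have htne : t.Nonempty := by
    obtain ⟨x, hx⟩ := hne
    obtain ⟨y, hy, -⟩ := mem_iUnion₂.1 (hcover hx)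
    exact ⟨y, hy⟩
  obtain ⟨e, rfl⟩ := htfin.countable.exists_eq_range htne
  obtain ⟨s, hs⟩ : ∃ s : Finset ℕ, range e ⊆ e '' s := by
    obtain ⟨s, -, hsfin, hs⟩ :=
      exists_subset_image_finite_and (p := (range e ⊆ ·)).1
        ⟨range e, image_univ.ge, htfin, subset_rfl⟩
    exact ⟨hsfin.toFinset, by rwa [hsfin.coe_toFinset]⟩
  refine ⟨SimpleFunc.nearestPt e (s.sup id), fun x => htB ⟨_, rfl⟩, fun x hx => ?_⟩
  obtain ⟨y, hy, hxy⟩ := mem_iUnion₂.1 (hcover hx)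
  obtain ⟨k, hk, rfl⟩ := hs hy
  have hnear := SimpleFunc.edist_nearestPt_le e x (Finset.le_sup (f := id) hk)
  rw [edist_dist, edist_dist, ENNReal.ofReal_le_ofReal_iff dist_nonneg] at hnear
  exact hnear.trans_lt (by rwa [dist_comm])

lemma norm_sub_contraction_lt
    {E : Type*} [NormedAddCommGroup E] [NormedSpace ℝ E] {δ R : ℝ} (hδ : 0 < δ) {x y z : E}
    (hxy : dist y x < δ) (hyz : dist y z ≤ R) :
    ‖x - ((1 - δ) • y + δ • z)‖ < δ * (1 + R) := by
  have hsplit : x - ((1 - δ) • y + δ • z) = (x - y) + δ • (y - z) := by module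
  calc ‖x - ((1 - δ) • y + δ • z)‖ ≤ dist y x + δ * dist y z := by
        rw [hsplit, dist_comm, dist_eq_norm, dist_eq_norm]
        exact (norm_add_le _ _).trans_eq (by rw [norm_smul, Real.norm_of_nonneg hδ.le])
    _ < δ * (1 + R) := by nlinarith

variable {ι E : Type*} [NormedAddCommGroup E] [NormedSpace ℝ E] [FiniteDimensional ℝ E]
  [MeasurableSpace E] [BorelSpace E] {μ : Measure E} [μ.IsAddHaarMeasure] {B : Set E} {δ : ℝ}
  {u : ι → E → ℝ}

lemma tendsto_sum_contractedAverage_sub (𝓕 : Ultrafilter ι) (hB : Convex ℝ B)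
    (hBm : MeasurableSet B) (hB0 : μ B ≠ 0) (hBfin : μ B ≠ ⊤) (hδ : δ ∈ Ioc (0 : ℝ) 1)
    (hu : ∀ i, Measurable (u i)) (hint : ∀ i, IntegrableOn (u i) B μ) {K : ℝ≥0∞} (hK : K ≠ ⊤)
    (hbdd : ∀ i, diffEnergy μ (B ×ˢ B) (u i) ≤ K) {t : Finset E} (ht : ∀ x ∈ t, x ∈ B) :
    Tendsto (fun p : ι × ι => ∑ x ∈ t, ∑ y ∈ t, ENNReal.ofReal
      ((contractedAverage μ B δ x (u p.1 - u p.2) -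
        contractedAverage μ B δ y (u p.1 - u p.2)) ^ 2))
      ((𝓕 : Filter ι) ×ˢ (𝓕 : Filter ι)) (𝓝 0) := by
  suffices h : ∀ x ∈ t, ∀ y ∈ t, Tendsto (fun p : ι × ι => ENNReal.ofReal
      ((contractedAverage μ B δ x (u p.1 - u p.2) -
        contractedAverage μ B δ y (u p.1 - u p.2)) ^ 2))
      ((𝓕 : Filter ι) ×ˢ (𝓕 : Filter ι)) (𝓝 0) by
    have hsum := tendsto_finsetSum t fun x hx => tendsto_finsetSum t fun y hy => h x hx y hy
    simpa only [Finset.sum_const_zero] using hsum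
  intro x hx y hy
  have hcontr : ∀ y ∈ B, ∀ z ∈ B, (1 - δ) • y + δ • z ∈ B := fun y hy z hz =>
    hB hy hz (sub_nonneg.2 hδ.2) hδ.1.le (sub_add_cancel 1 δ)
  have hav : ∀ p : ι × ι, contractedAverage μ B δ x (u p.1 - u p.2) -
      contractedAverage μ B δ y (u p.1 - u p.2) =
        (contractedAverage μ B δ x (u p.1) - contractedAverage μ B δ y (u p.1)) -
          (contractedAverage μ B δ x (u p.2) - contractedAverage μ B δ y (u p.2)) := fun p => by
    rw [contractedAverage_sub hBm hBm hδ.1 (hcontr x (ht x hx)) (hint _) (hint _),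
      contractedAverage_sub hBm hBm hδ.1 (hcontr y (ht y hy)) (hint _) (hint _)]
    ring
  set κ := ENNReal.ofReal ((δ ^ Module.finrank ℝ E)⁻¹)
  have hκ : κ * (κ * K) / (μ B * μ B) ≠ ⊤ := ENNReal.div_ne_top
    (ENNReal.mul_ne_top ENNReal.ofReal_ne_top (ENNReal.mul_ne_top ENNReal.ofReal_ne_top hK))
    (mul_ne_zero hB0 hB0)
  simp only [hav]
  refine tendsto_ofReal_sub_sq_of_bounded 𝓕 (a := fun i =>
    contractedAverage μ B δ x (u i) - contractedAverage μ B δ y (u i)) hκ fun i => ?_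
  refine (ENNReal.le_div_iff_mul_le (Or.inl (mul_ne_zero hB0 hB0))
    (Or.inl (ENNReal.mul_ne_top hBfin hBfin))).2 ?_
  rw [mul_comm, mul_assoc]
  refine (contractedAverage_sub_sq_le hB hBm hBfin hδ (hu i) (hint i) (ht x hx) (ht y hy)).trans ?_
  gcongr
  exact hbdd i

lemma measure_mul_lintegral_sub_contractedAverage_sub_sq_le (hB : Convex ℝ B)
    (hBm : MeasurableSet B) (hBb : IsBounded B) (hδ : δ ∈ Ioc (0 : ℝ) 1) {j : SimpleFunc E E}
    (hjB : ∀ x, j x ∈ B) (hj : ∀ x ∈ B, dist (j x) x < δ) {v w : E → ℝ} (hv : Measurable v)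
    (hw : Measurable w) (hvi : IntegrableOn v B μ) (hwi : IntegrableOn w B μ) :
    μ B * ∫⁻ x in B,
        ENNReal.ofReal (((v - w) x - contractedAverage μ B δ (j x) (v - w)) ^ 2) ∂μ ≤
      ENNReal.ofReal ((δ ^ Module.finrank ℝ E)⁻¹) *
        (2 * diffEnergy μ (B ×ˢ B ∩ nearDiag E (δ * (1 + Metric.diam B))) v +
          2 * diffEnergy μ (B ×ˢ B ∩ nearDiag E (δ * (1 + Metric.diam B))) w) := by
  refine (measure_mul_lintegral_sub_contractedAverage_sq_le hBm hBb.measure_lt_top.ne hδ.1 j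
    (fun x hx z hz => ⟨?_, ?_⟩) (hv.sub hw) (hvi.sub hwi)).trans
      (mul_le_mul_right (diffEnergy_sub_le hv _) _)
  · exact hB (hjB x) hz (sub_nonneg.2 hδ.2) hδ.1.le (sub_add_cancel 1 δ)
  · exact norm_sub_contraction_lt hδ.1 (hj x hx) (Metric.dist_le_diam_of_mem hBb (hjB x) hz)

-- On a small scale the functions are replaced by finitely many averages, which converge along the
-- ultrafilter.
lemma cauchyModConst_of_convex (𝓕 : Ultrafilter ι) (hB : Convex ℝ B) (hBo : IsOpen B)
    (hBb : IsBounded B) (hu : ∀ i, Measurable (u i)) (hint : ∀ i, IntegrableOn (u i) B μ)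
    {K : ℝ≥0∞} (hK : K ≠ ⊤) (hbdd : ∀ i, diffEnergy μ (B ×ˢ B) (u i) ≤ K)
    (hsmall : ∀ R > 0, ∀ ε > 0, ∃ δ ∈ Ioc (0 : ℝ) 1, ∀ i,
      ENNReal.ofReal ((δ ^ Module.finrank ℝ E)⁻¹) *
        diffEnergy μ (B ×ˢ B ∩ nearDiag E (δ * R)) (u i) ≤ ε) :
    CauchyModConst 𝓕 μ u B := by
  rcases B.eq_empty_or_nonempty with rfl | hne
  · simp only [CauchyModConst, diffEnergy, empty_prod, setLIntegral_empty, tendsto_const_nhds]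
  have hBfin : μ B ≠ ⊤ := hBb.measure_lt_top.ne
  rw [CauchyModConst, ENNReal.tendsto_nhds_zero]
  intro ε hε
  obtain ⟨δ, hδ, hδsmall⟩ := hsmall (1 + Metric.diam B)
    (by linarith [Metric.diam_nonneg (s := B)]) (ε / 2 / 24)
    (ENNReal.div_pos (ENNReal.half_pos hε.ne').ne' (by norm_num))
  obtain ⟨j, hjB, hj⟩ := exists_simpleFunc_dist_lt
    (hBb.isCompact_closure.totallyBounded.subset subset_closure) hne hδ.1
  have happrox : ∀ p : ι × ι, 6 * (μ B * ∫⁻ x in B, ENNReal.ofReal (((u p.1 - u p.2) x -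
      contractedAverage μ B δ (j x) (u p.1 - u p.2)) ^ 2) ∂μ) ≤ ε / 2 := fun p =>
    calc _ ≤ 6 * (2 * (ε / 2 / 24) + 2 * (ε / 2 / 24)) := by
          gcongr 6 * ?_
          refine (measure_mul_lintegral_sub_contractedAverage_sub_sq_le hB hBo.measurableSet hBb hδ
            hjB hj (hu _) (hu _) (hint _) (hint _)).trans ?_
          rw [mul_add, mul_left_comm, mul_left_comm _ 2]
          exact add_le_add (mul_le_mul_right (hδsmall _) 2) (mul_le_mul_right (hδsmall _) 2)
      _ = ε / 2 := by
          rw [← add_mul, ← mul_assoc, show (6 * (2 + 2) : ℝ≥0∞) = 24 by norm_num,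
            ENNReal.mul_div_cancel (by norm_num) (by norm_num)]
  have hrange : ∀ x ∈ j.range, x ∈ B := fun x hx => by
    obtain ⟨z, rfl⟩ := SimpleFunc.mem_range.1 hx
    exact hjB z
  have havg := ENNReal.Tendsto.const_mul (a := 3 * (μ B * μ B))
    (tendsto_sum_contractedAverage_sub 𝓕 hB hBo.measurableSet (hBo.measure_pos μ hne).ne' hBfin hδ
      hu hint hK hbdd hrange)
    (Or.inr (ENNReal.mul_ne_top ENNReal.ofNat_ne_top (ENNReal.mul_ne_top hBfin hBfin)))
  rw [mul_zero, ENNReal.tendsto_nhds_zero] at havg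
  filter_upwards [havg (ε / 2) (ENNReal.half_pos hε.ne')] with p hp
  refine (diffEnergy_le_approx_add_sum B j (fun y => contractedAverage μ B δ y (u p.1 - u p.2))
    ((hu _).sub (hu _))).trans ?_
  rw [← mul_assoc (μ B) (μ B), ← mul_assoc 3, ← ENNReal.add_halves ε]
  exact add_le_add (happrox p) hp

end CauchyModuloConstants

section BoundedFamilies

/-- The hypothesis of the Bourgain–Brezis–Mironescu compactness theorem on the set `V`: a family
of integrable functions `u i` whose Gagliardo energies of order `σ i ∈ (s₀, 1)`, multiplied by
`1 - σ i`, are bounded by `C`. -/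
structure BBMBounded {ι E : Type*} [NormedAddCommGroup E] [NormedSpace ℝ E] [MeasurableSpace E]
    (μ : Measure E) (s₀ : ℝ) (C : ℝ≥0∞) (σ : ι → ℝ) (u : ι → E → ℝ) (V : Set E) : Prop where
  measurable : ∀ i, Measurable (u i)
  integrableOn : ∀ i, IntegrableOn (u i) V μ
  exponent_mem : ∀ i, σ i ∈ Ioo s₀ 1
  energy_le : ∀ i, ENNReal.ofReal (1 - σ i) * gagliardoEnergy μ (σ i) (V ×ˢ V) (u i) ≤ C

variable {ι E : Type*} [NormedAddCommGroup E] [NormedSpace ℝ E] [MeasurableSpace E]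
  {μ : Measure E} {s₀ : ℝ} {C : ℝ≥0∞} {σ : ι → ℝ} {u : ι → E → ℝ} {V W : Set E}

lemma BBMBounded.mono (h : BBMBounded μ s₀ C σ u V) (hWV : W ⊆ V) : BBMBounded μ s₀ C σ u W where
  measurable := h.measurable
  integrableOn i := (h.integrableOn i).mono_set hWV
  exponent_mem := h.exponent_mem
  energy_le i := (mul_le_mul_right (lintegral_mono_set (prod_mono hWV hWV)) _).trans (h.energy_le i)

variable [FiniteDimensional ℝ E] [BorelSpace E] [μ.IsAddHaarMeasure] [Nontrivial E]

lemma BBMBounded.diffEnergy_nearDiag_le (h : BBMBounded μ s₀ C σ u V) (hs₀ : 0 < s₀)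
    {Z : Set (E × E)} (hZ : MidpointStable Z) (hZV : Z ⊆ V ×ˢ V) {r : ℝ} (hr : 0 < r) (i : ι) :
    diffEnergy μ (Z ∩ nearDiag E r) (u i) ≤
      ENNReal.ofReal (8 * r ^ (Module.finrank ℝ E + 2 * σ i)) * C := by
  refine (hZ.diffEnergy_le_gagliardoEnergy (h.measurable i) hr
    ⟨hs₀.trans (h.exponent_mem i).1, (h.exponent_mem i).2⟩).trans ?_
  gcongr
  exact (mul_le_mul_right (lintegral_mono_set hZV) _).trans (h.energy_le i)

lemma BBMBounded.diffEnergy_prod_le (h : BBMBounded μ s₀ C σ u V) (hs₀ : 0 < s₀)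
    (hV : Convex ℝ V) (hVm : MeasurableSet V) (hVb : IsBounded V) (i : ι) :
    diffEnergy μ (V ×ˢ V) (u i) ≤
      ENNReal.ofReal (8 * (1 + Metric.diam V) ^ ((Module.finrank ℝ E : ℝ) + 2)) * C := by
  have hdiam : 0 ≤ Metric.diam V := Metric.diam_nonneg
  have hnear : V ×ˢ V ⊆ V ×ˢ V ∩ nearDiag E (1 + Metric.diam V) := fun q hq =>
    ⟨hq, mem_nearDiag.2 ((dist_eq_norm q.1 q.2 ▸ Metric.dist_le_diam_of_mem hVb hq.1 hq.2).trans_lt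
      (lt_one_add _))⟩
  refine (diffEnergy_mono hnear _).trans ((h.diffEnergy_nearDiag_le hs₀
    (MidpointStable.prod_self hV hVm) subset_rfl (by positivity) i).trans ?_)
  gcongr
  · linarith
  · linarith [(h.exponent_mem i).2]

lemma tendsto_ofReal_mul_rpow_mul {A R p : ℝ} (hp : 0 < p) (hC : C ≠ ⊤) :
    Tendsto (fun δ : ℝ => ENNReal.ofReal (A * (δ * R) ^ p) * C) (𝓝[>] 0) (𝓝 0) := by
  have hcont : Continuous fun δ : ℝ => A * (δ * R) ^ p :=
    continuous_const.mul ((continuous_id.mul continuous_const).rpow_const fun _ => Or.inr hp.le)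
  have hlim : Tendsto (fun δ : ℝ => ENNReal.ofReal (A * (δ * R) ^ p)) (𝓝[>] 0)
      (𝓝 (ENNReal.ofReal (A * (0 * R) ^ p))) :=
    ((ENNReal.continuous_ofReal.comp hcont).tendsto 0).mono_left nhdsWithin_le_nhds
  rw [zero_mul, Real.zero_rpow hp.ne', mul_zero, ENNReal.ofReal_zero] at hlim
  simpa only [zero_mul] using ENNReal.Tendsto.mul_const hlim (Or.inr hC)

lemma BBMBounded.exists_small_scale (h : BBMBounded μ s₀ C σ u V) (hs₀ : 0 < s₀) (hC : C ≠ ⊤)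
    (hV : Convex ℝ V) (hVm : MeasurableSet V) {R : ℝ} (hR : 0 < R) {ε : ℝ≥0∞} (hε : 0 < ε) :
    ∃ δ ∈ Ioc (0 : ℝ) 1, ∀ i, ENNReal.ofReal ((δ ^ Module.finrank ℝ E)⁻¹) *
      diffEnergy μ (V ×ˢ V ∩ nearDiag E (δ * R)) (u i) ≤ ε := by
  set n := Module.finrank ℝ E
  have hlim := tendsto_ofReal_mul_rpow_mul (A := 8 * R ^ n) (R := R) (p := 2 * s₀)
    (by positivity) hC
  obtain ⟨δ, hδε, hδ, hδR⟩ := ((hlim.eventually (ge_mem_nhds hε)).and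
    (Ioo_mem_nhdsGT (by positivity : 0 < min 1 R⁻¹))).exists
  have hδR1 : δ * R ≤ 1 := by
    rw [← le_div_iff₀ hR, one_div]
    exact (hδR.trans_le (min_le_right _ _)).le
  refine ⟨δ, ⟨hδ, (hδR.trans_le (min_le_left _ _)).le⟩, fun i => le_trans ?_ hδε⟩
  have hδR0 : 0 < δ * R := by positivity
  calc ENNReal.ofReal ((δ ^ n)⁻¹) * diffEnergy μ (V ×ˢ V ∩ nearDiag E (δ * R)) (u i)
      ≤ ENNReal.ofReal ((δ ^ n)⁻¹) * (ENNReal.ofReal (8 * (δ * R) ^ (n + 2 * σ i)) * C) := by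
        gcongr
        exact h.diffEnergy_nearDiag_le hs₀ (MidpointStable.prod_self hV hVm) subset_rfl hδR0 i
    _ = ENNReal.ofReal (8 * R ^ n * (δ * R) ^ (2 * σ i)) * C := by
        rw [← mul_assoc, ← ENNReal.ofReal_mul (by positivity), Real.rpow_add hδR0,
          Real.rpow_natCast, mul_pow]
        congr 2
        field_simp
    _ ≤ ENNReal.ofReal (8 * R ^ n * (δ * R) ^ (2 * s₀)) * C := by
        gcongr ENNReal.ofReal (8 * R ^ n * ?_) * C
        exact Real.rpow_le_rpow_of_exponent_ge hδR0 hδR1 (by linarith [(h.exponent_mem i).1])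

lemma BBMBounded.cauchyModConst_of_convex (h : BBMBounded μ s₀ C σ u V) (𝓕 : Ultrafilter ι)
    (hs₀ : 0 < s₀) (hC : C ≠ ⊤) (hV : Convex ℝ V) (hVo : IsOpen V) (hVb : IsBounded V) :
    CauchyModConst 𝓕 μ u V :=
  FracNeumann.cauchyModConst_of_convex 𝓕 hV hVo hVb h.measurable h.integrableOn
    (ENNReal.mul_ne_top ENNReal.ofReal_ne_top hC)
    (h.diffEnergy_prod_le hs₀ hV hVo.measurableSet hVb)
    fun _ hR _ hε => h.exists_small_scale hs₀ hC hV hVo.measurableSet hR hε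

end BoundedFamilies

section Transport

variable {X : Type*} [MeasurableSpace X] {ν : Measure X} [SFinite ν] {T : X → X} {V : Set X}

lemma diffEnergy_comp (hT : MeasurePreserving T ν ν) (hV : MeasurableSet V) {v : X → ℝ}
    (hv : Measurable v) :
    diffEnergy ν ((T ⁻¹' V) ×ˢ (T ⁻¹' V)) (v ∘ T) = diffEnergy ν (V ×ˢ V) v :=
  (hT.prod hT).setLIntegral_comp_preimage (hV.prod hV)
    (f := fun q => ENNReal.ofReal ((v q.1 - v q.2) ^ 2)) (by fun_prop)

lemma CauchyModConst.of_comp {ι : Type*} {𝓕 : Filter ι} {u : ι → X → ℝ}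
    (hT : MeasurePreserving T ν ν) (hV : MeasurableSet V) (hu : ∀ i, Measurable (u i))
    (h : CauchyModConst 𝓕 ν (fun i => u i ∘ T) (T ⁻¹' V)) : CauchyModConst 𝓕 ν u V :=
  h.congr fun p => diffEnergy_comp hT hV ((hu p.1).sub (hu p.2))

variable {E : Type*} [NormedAddCommGroup E] [NormedSpace ℝ E] [MeasurableSpace E]
  [FiniteDimensional ℝ E] [BorelSpace E] {μ : Measure E} [μ.IsAddHaarMeasure] {T : E → E}
  {K : ℝ≥0} {s : ℝ} {V : Set E}

lemma gagliardoEnergy_comp_le (hT : MeasurePreserving T μ μ) (hL : LipschitzWith K T)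
    (hV : MeasurableSet V) {v : E → ℝ} (hv : Measurable v) (hs : 0 ≤ s) :
    gagliardoEnergy μ s ((T ⁻¹' V) ×ˢ (T ⁻¹' V)) (v ∘ T) ≤
      ENNReal.ofReal ((K : ℝ) ^ (Module.finrank ℝ E + 2 * s)) *
        gagliardoEnergy μ s (V ×ˢ V) v := by
  set p : ℝ := Module.finrank ℝ E + 2 * s
  have hp : 0 ≤ p := by positivity
  have htransport := (hT.prod hT).setLIntegral_comp_preimage (hV.prod hV)
    (f := fun q => ENNReal.ofReal ((v q.1 - v q.2) ^ 2 / ‖q.1 - q.2‖ ^ p)) (by fun_prop)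
  rw [gagliardoEnergy, gagliardoEnergy, ← htransport,
    ← lintegral_const_mul' _ _ ENNReal.ofReal_ne_top]
  refine lintegral_mono fun q => ?_
  rw [← ENNReal.ofReal_mul (by positivity)]
  refine ENNReal.ofReal_le_ofReal ?_
  simp only [Function.comp_apply, Prod.map_fst, Prod.map_snd]
  rcases eq_or_ne (T q.1) (T q.2) with heq | hne
  · rw [heq, sub_self, zero_pow two_ne_zero, zero_div, zero_div, mul_zero]
  have hTq : 0 < ‖T q.1 - T q.2‖ := norm_sub_pos_iff.2 hne
  have hq : 0 < ‖q.1 - q.2‖ := norm_sub_pos_iff.2 fun h => hne (congrArg T h)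
  rw [← mul_div_assoc, div_le_div_iff₀ (by positivity) (by positivity), mul_right_comm,
    mul_comm _ ((v _ - v _) ^ 2)]
  gcongr
  rw [← Real.mul_rpow K.coe_nonneg hq.le]
  exact Real.rpow_le_rpow hTq.le (hL.norm_sub_le _ _) hp

lemma BBMBounded.comp {ι : Type*} {s₀ : ℝ} {C : ℝ≥0∞} {σ : ι → ℝ} {u : ι → E → ℝ}
    (h : BBMBounded μ s₀ C σ u V) (hs₀ : 0 < s₀) (hT : MeasurePreserving T μ μ)
    (hL : LipschitzWith K T) (hK : 1 ≤ K) (hV : MeasurableSet V) :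
    BBMBounded μ s₀ (ENNReal.ofReal ((K : ℝ) ^ ((Module.finrank ℝ E : ℝ) + 2)) * C) σ
      (fun i => u i ∘ T) (T ⁻¹' V) where
  measurable i := (h.measurable i).comp hT.measurable
  integrableOn i :=
    (hT.restrict_preimage hV).integrable_comp_of_integrable (h.integrableOn i)
  exponent_mem := h.exponent_mem
  energy_le i := by
    refine (mul_le_mul_right (gagliardoEnergy_comp_le hT hL hV (h.measurable i)
      (hs₀.trans (h.exponent_mem i).1).le) _).trans ?_
    rw [mul_left_comm]
    gcongr ENNReal.ofReal ?_ * ?_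
    · exact Real.rpow_le_rpow_of_exponent_le hK (by linarith [(h.exponent_mem i).2])
    · exact h.energy_le i

end Transport

section GraphShear

variable {E : Type*} [NormedAddCommGroup E] [NormedSpace ℝ E] {ℓ : StrongDual ℝ E} {e : E}
  {f : E → ℝ}

lemma sub_smul_add_smul_eq (he : ℓ e = 1) (x : E) (t : ℝ) :
    x + t • e - ℓ (x + t • e) • e = x - ℓ x • e := by
  rw [map_add, map_smul, he, smul_eq_mul, mul_one]
  module

/-- The shear along `e` by a function `f` of the component of the point in the kernel of `ℓ`.
It maps the half-space `{0 < ℓ}` onto the region above the graph of `f` over this kernel. -/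
def graphShear (he : ℓ e = 1) (hf : Continuous f) : E ≃ₜ E where
  toFun x := x + f (x - ℓ x • e) • e
  invFun x := x + -f (x - ℓ x • e) • e
  left_inv x := by beta_reduce; rw [sub_smul_add_smul_eq he]; module
  right_inv x := by beta_reduce; rw [sub_smul_add_smul_eq he]; module
  continuous_toFun := by fun_prop
  continuous_invFun := by fun_prop

lemma graphShear_apply (he : ℓ e = 1) (hf : Continuous f) (x : E) :
    graphShear he hf x = x + f (x - ℓ x • e) • e := rfl

lemma graphShear_mem_epigraph (he : ℓ e = 1) (hf : Continuous f) (x : E) :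
    f (graphShear he hf x - ℓ (graphShear he hf x) • e) < ℓ (graphShear he hf x) ↔ 0 < ℓ x := by
  rw [graphShear_apply, sub_smul_add_smul_eq he, map_add, map_smul, he, smul_eq_mul, mul_one,
    lt_add_iff_pos_left]

lemma exists_lipschitzWith_graphShear (he : ℓ e = 1) {L : ℝ≥0} (hf : LipschitzWith L f) :
    ∃ K ≥ 1, LipschitzWith K (graphShear he hf.continuous) :=
  ⟨_, le_add_of_nonneg_right zero_le,
    LipschitzWith.id.add ((ContinuousLinearMap.toSpanSingleton ℝ e).lipschitz.comp
      (hf.comp (ContinuousLinearMap.id ℝ E - ℓ.smulRight e).lipschitz))⟩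

variable [MeasurableSpace E] [BorelSpace E] [SecondCountableTopology E] {μ : Measure E} [SFinite μ]
  [μ.IsAddRightInvariant]

-- Averaging `1 = ∫ 1_(0,1](ℓ x + t) dt` against `F` slices the integral along the direction `e`.
lemma lintegral_eq_lintegral_slices (he : ℓ e = 1) {F : E → ℝ≥0∞} (hF : Measurable F) :
    ∫⁻ x, F x ∂μ =
      ∫⁻ x, (Ioc (0 : ℝ) 1).indicator 1 (ℓ x) * (∫⁻ t : ℝ, F (x + t • e)) ∂μ := by
  set η : ℝ → ℝ≥0∞ := (Ioc (0 : ℝ) 1).indicator 1 with hη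
  have hηm : Measurable η := measurable_one.indicator measurableSet_Ioc
  have hone : ∀ a : ℝ, ∫⁻ t, η (a - t) = 1 := fun a => by
    rw [lintegral_sub_left_eq_self η a, hη, lintegral_indicator_one measurableSet_Ioc,
      Real.volume_Ioc, sub_zero, ENNReal.ofReal_one]
  calc ∫⁻ x, F x ∂μ = ∫⁻ x, (∫⁻ t : ℝ, F x * η (ℓ x - t)) ∂μ := by
        refine lintegral_congr fun x => ?_
        rw [lintegral_const_mul _ (by fun_prop), hone, mul_one]
    _ = ∫⁻ t : ℝ, ∫⁻ x, F x * η (ℓ x - t) ∂μ :=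
        lintegral_lintegral_swap (by unfold Function.uncurry; fun_prop)
    _ = ∫⁻ t : ℝ, ∫⁻ x, F (x + t • e) * η (ℓ x) ∂μ := by
        refine lintegral_congr fun t => ?_
        rw [← lintegral_add_right_eq_self (fun x => F x * η (ℓ x - t)) (t • e)]
        simp only [map_add, map_smul, he, smul_eq_mul, mul_one, add_sub_cancel_right]
    _ = ∫⁻ x, (∫⁻ t : ℝ, F (x + t • e) * η (ℓ x)) ∂μ :=
        lintegral_lintegral_swap (by unfold Function.uncurry; fun_prop)
    _ = ∫⁻ x, η (ℓ x) * (∫⁻ t : ℝ, F (x + t • e)) ∂μ := by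
        refine lintegral_congr fun x => ?_
        rw [lintegral_mul_const _ (by fun_prop), mul_comm]

lemma measurePreserving_graphShear (he : ℓ e = 1) (hf : Continuous f) :
    MeasurePreserving (graphShear he hf) μ μ := by
  have hT := (graphShear he hf).continuous.measurable
  refine ⟨hT, Measure.ext_of_lintegral _ fun F hF => ?_⟩
  rw [lintegral_map hF hT,
    lintegral_eq_lintegral_slices he (F := fun x => F (graphShear he hf x)) (hF.comp hT),
    lintegral_eq_lintegral_slices he hF]
  refine lintegral_congr fun x => congrArg _ ?_
  rw [← lintegral_add_right_eq_self (fun t : ℝ => F (x + t • e)) (f (x - ℓ x • e))]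
  simp only [graphShear_apply, sub_smul_add_smul_eq he, add_assoc, ← add_smul]

end GraphShear

section BoundaryCharts

variable {ι E : Type*} [NormedAddCommGroup E] [NormedSpace ℝ E] [MeasurableSpace E]
  [FiniteDimensional ℝ E] [Nontrivial E] [BorelSpace E] {μ : Measure E} [μ.IsAddHaarMeasure]
  {s₀ : ℝ} {C : ℝ≥0∞} {σ : ι → ℝ} {u : ι → E → ℝ} {Ω : Set E}

lemma BBMBounded.exists_cauchyModConst_of_mem (h : BBMBounded μ s₀ C σ u Ω) (𝓕 : Ultrafilter ι)
    (hs₀ : 0 < s₀) (hC : C ≠ ⊤) (hΩ : IsOpen Ω) {x₀ : E} (hx₀ : x₀ ∈ Ω) :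
    ∃ U, IsOpen U ∧ x₀ ∈ U ∧ CauchyModConst 𝓕 μ u (U ∩ Ω) := by
  obtain ⟨ρ, hρ, hsub⟩ := Metric.isOpen_iff.1 hΩ x₀ hx₀
  refine ⟨Metric.ball x₀ ρ, Metric.isOpen_ball, Metric.mem_ball_self hρ, ?_⟩
  rw [inter_eq_self_of_subset_left hsub]
  exact (h.mono hsub).cauchyModConst_of_convex 𝓕 hs₀ hC (convex_ball _ _) Metric.isOpen_ball
    Metric.isBounded_ball

lemma BBMBounded.exists_cauchyModConst_of_epigraph (h : BBMBounded μ s₀ C σ u Ω)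
    (𝓕 : Ultrafilter ι) (hs₀ : 0 < s₀) (hC : C ≠ ⊤) (hΩ : IsOpen Ω) {ℓ : StrongDual ℝ E} {e : E}
    (he : ℓ e = 1) {L : ℝ≥0} {f : E → ℝ} (hf : LipschitzWith L f) {x₀ : E} {r : ℝ} (hr : 0 < r)
    (hgraph : ∀ y ∈ Metric.ball x₀ r, (y ∈ Ω ↔ f (y - ℓ y • e) < ℓ y)) :
    ∃ U, IsOpen U ∧ x₀ ∈ U ∧ CauchyModConst 𝓕 μ u (U ∩ Ω) := by
  set T := graphShear he hf.continuous
  obtain ⟨K, hK, hL⟩ : ∃ K ≥ 1, LipschitzWith K T := exists_lipschitzWith_graphShear he hf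
  set D := Metric.ball (T.symm x₀) (r / K)
  have hTD : ∀ z ∈ D, T z ∈ Metric.ball x₀ r := fun z hz => by
    have hTz := hL.dist_lt_mul_of_lt (by positivity) hz
    rwa [T.apply_symm_apply, mul_div_cancel₀ _ (by positivity)] at hTz
  have hpre : T ⁻¹' (T.symm ⁻¹' D ∩ Ω) = D ∩ {z | 0 < ℓ z} := by
    ext z
    rw [mem_preimage, mem_inter_iff, mem_preimage, T.symm_apply_apply]
    exact and_congr_right fun hz =>
      (hgraph _ (hTD z hz)).trans (graphShear_mem_epigraph he hf.continuous z)
  have hUo : IsOpen (T.symm ⁻¹' D) := Metric.isOpen_ball.preimage T.symm.continuous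
  have hUΩ : MeasurableSet (T.symm ⁻¹' D ∩ Ω) := (hUo.inter hΩ).measurableSet
  have hT : MeasurePreserving T μ μ := measurePreserving_graphShear he hf.continuous
  refine ⟨T.symm ⁻¹' D, hUo, Metric.mem_ball_self (by positivity), ?_⟩
  refine CauchyModConst.of_comp hT hUΩ h.measurable
    (((h.mono inter_subset_right).comp hs₀ hT hL hK hUΩ).cauchyModConst_of_convex 𝓕 hs₀
      (ENNReal.mul_ne_top ENNReal.ofReal_ne_top hC) ?_ ?_ ?_)
  · exact hpre ▸ (convex_ball _ _).inter (convex_halfSpace_gt ℓ.isLinear 0)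
  · exact (hUo.inter hΩ).preimage T.continuous
  · exact hpre ▸ Metric.isBounded_ball.subset inter_subset_left

end BoundaryCharts

section Gluing

variable {X : Type*} [MeasurableSpace X] {ν : Measure X} [SFinite ν]

lemma measure_inter_mul_diffEnergy_prod_le (A B : Set X) {v : X → ℝ} (hv : Measurable v) :
    ν (A ∩ B) * diffEnergy ν (A ×ˢ B) v ≤
      2 * ν B * diffEnergy ν (A ×ˢ A) v + 2 * ν A * diffEnergy ν (B ×ˢ B) v := by
  set G : X → ℝ≥0∞ := fun x => ∫⁻ z in A ∩ B, ENNReal.ofReal ((v x - v z) ^ 2) ∂ν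
  have hG : Measurable G := by fun_prop
  have hGA : ∫⁻ x in A, G x ∂ν ≤ diffEnergy ν (A ×ˢ A) v :=
    (diffEnergy_prod A (A ∩ B) hv).symm.trans_le
      (diffEnergy_mono (prod_mono_right inter_subset_left) v)
  have hGB : ∫⁻ x in B, G x ∂ν ≤ diffEnergy ν (B ×ˢ B) v :=
    (diffEnergy_prod B (A ∩ B) hv).symm.trans_le
      (diffEnergy_mono (prod_mono_right inter_subset_right) v)
  have hthrough : ∀ x y, ν (A ∩ B) * ENNReal.ofReal ((v x - v y) ^ 2) ≤ 2 * G x + 2 * G y :=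
    fun x y => by
      rw [mul_comm, ← setLIntegral_const, ← lintegral_const_mul _ (by fun_prop),
        ← lintegral_const_mul _ (by fun_prop), ← lintegral_add_left (by fun_prop)]
      exact lintegral_mono fun z => ofReal_sub_sq_le_two _ _ _
  rw [diffEnergy_prod A B hv, ← lintegral_const_mul _ (by fun_prop)]
  calc ∫⁻ x in A, ν (A ∩ B) * ∫⁻ y in B, ENNReal.ofReal ((v x - v y) ^ 2) ∂ν ∂ν
      ≤ ∫⁻ x in A, (2 * ν B * G x + 2 * ∫⁻ y in B, G y ∂ν) ∂ν := by
        refine lintegral_mono fun x => ?_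
        rw [← lintegral_const_mul _ (by fun_prop)]
        refine (lintegral_mono (hthrough x)).trans_eq ?_
        rw [lintegral_add_left (by fun_prop), lintegral_const_mul _ hG, setLIntegral_const,
          mul_right_comm]
    _ = 2 * ν B * ∫⁻ x in A, G x ∂ν + 2 * ν A * ∫⁻ y in B, G y ∂ν := by
        rw [lintegral_add_left (by fun_prop), lintegral_const_mul _ hG, setLIntegral_const]
        ring
    _ ≤ _ := by gcongr

lemma diffEnergy_union_prod_self_le {A B : Set X} {v : X → ℝ} (hv : Measurable v)
    (h0 : ν (A ∩ B) ≠ 0) (htop : ν (A ∩ B) ≠ ⊤) :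
    diffEnergy ν ((A ∪ B) ×ˢ (A ∪ B)) v ≤
      diffEnergy ν (A ×ˢ A) v + diffEnergy ν (B ×ˢ B) v +
        2 * ((2 * ν B * diffEnergy ν (A ×ˢ A) v + 2 * ν A * diffEnergy ν (B ×ˢ B) v) /
          ν (A ∩ B)) := by
  have hcross : ∀ A B : Set X, ν (A ∩ B) ≠ 0 → ν (A ∩ B) ≠ ⊤ → diffEnergy ν (A ×ˢ B) v ≤
      (2 * ν B * diffEnergy ν (A ×ˢ A) v + 2 * ν A * diffEnergy ν (B ×ˢ B) v) / ν (A ∩ B) :=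
    fun A B h0 htop => by
      rw [ENNReal.le_div_iff_mul_le (Or.inl h0) (Or.inl htop), mul_comm]
      exact measure_inter_mul_diffEnergy_prod_le A B hv
  have hAB := hcross A B h0 htop
  have hBA := hcross B A (inter_comm A B ▸ h0) (inter_comm A B ▸ htop)
  rw [inter_comm, add_comm] at hBA
  have hsplit : (A ∪ B) ×ˢ (A ∪ B) = (A ×ˢ A ∪ B ×ˢ B) ∪ (A ×ˢ B ∪ B ×ˢ A) := by
    rw [union_prod, prod_union, prod_union, union_comm (B ×ˢ A), union_union_union_comm]
  rw [hsplit, two_mul]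
  exact (diffEnergy_union_le _ _ v).trans (add_le_add (diffEnergy_union_le _ _ v)
    ((diffEnergy_union_le _ _ v).trans (add_le_add hAB hBA)))

lemma CauchyModConst.union {ι : Type*} {𝓕 : Filter ι} {u : ι → X → ℝ}
    (hu : ∀ i, Measurable (u i)) {V W : Set X} (hV : ν V ≠ ⊤) (hW : ν W ≠ ⊤)
    (hVW : ν (V ∩ W) ≠ 0) (h₁ : CauchyModConst 𝓕 ν u V) (h₂ : CauchyModConst 𝓕 ν u W) :
    CauchyModConst 𝓕 ν u (V ∪ W) := by
  have hlimV := ENNReal.Tendsto.const_mul (a := 2 * ν W) h₁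
    (Or.inr (ENNReal.mul_ne_top (by simp) hW))
  have hlimW := ENNReal.Tendsto.const_mul (a := 2 * ν V) h₂
    (Or.inr (ENNReal.mul_ne_top (by simp) hV))
  have hlim := (h₁.add h₂).add (ENNReal.Tendsto.const_mul (a := 2) (ENNReal.Tendsto.div_const
    (hlimV.add hlimW) (Or.inr hVW)) (Or.inr (by simp)))
  simp only [mul_zero, add_zero, ENNReal.zero_div] at hlim
  exact tendsto_of_tendsto_of_tendsto_of_le_of_le tendsto_const_nhds hlim (fun _ => zero_le)
    fun p => diffEnergy_union_prod_self_le ((hu p.1).sub (hu p.2)) hVW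
      (measure_ne_top_of_subset inter_subset_left hV)

variable {Y : Type*} [TopologicalSpace Y] {Ω : Set Y} {P : Set Y → Prop}

lemma exists_isOpen_of_isPreconnected (hΩ : IsOpen Ω) (hconn : IsPreconnected Ω)
    (hunion : ∀ V W, IsOpen V → IsOpen W → V ⊆ Ω → W ⊆ Ω → (V ∩ W).Nonempty →
      P V → P W → P (V ∪ W))
    (hlocal : ∀ x ∈ Ω, ∃ U, IsOpen U ∧ x ∈ U ∧ P (U ∩ Ω)) {x y : Y} (hx : x ∈ Ω) (hy : y ∈ Ω) :
    ∃ V, IsOpen V ∧ V ⊆ Ω ∧ x ∈ V ∧ y ∈ V ∧ P V := by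
  refine hconn.induction₂ (fun x y => ∃ V, IsOpen V ∧ V ⊆ Ω ∧ x ∈ V ∧ y ∈ V ∧ P V)
    (fun x hx => ?_) ?_ ?_ hx hy
  · obtain ⟨U, hU, hxU, hPU⟩ := hlocal x hx
    filter_upwards [mem_nhdsWithin_of_mem_nhds (hU.mem_nhds hxU), self_mem_nhdsWithin]
      with y hyU hyΩ
    exact ⟨U ∩ Ω, hU.inter hΩ, inter_subset_right, ⟨hxU, hx⟩, ⟨hyU, hyΩ⟩, hPU⟩
  · rintro x y z - - - ⟨V, hV, hVΩ, hxV, hyV, hPV⟩ ⟨W, hW, hWΩ, hyW, hzW, hPW⟩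
    exact ⟨V ∪ W, hV.union hW, union_subset hVΩ hWΩ, Or.inl hxV, Or.inr hzW,
      hunion V W hV hW hVΩ hWΩ ⟨y, hyV, hyW⟩ hPV hPW⟩
  · rintro x y - - ⟨V, hV, hVΩ, hxV, hyV, hPV⟩
    exact ⟨V, hV, hVΩ, hyV, hxV, hPV⟩

lemma property_of_isConnected_of_local (hΩ : IsOpen Ω) (hconn : IsConnected Ω)
    (hcpt : IsCompact (closure Ω))
    (hunion : ∀ V W, IsOpen V → IsOpen W → V ⊆ Ω → W ⊆ Ω → (V ∩ W).Nonempty →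
      P V → P W → P (V ∪ W))
    (hlocal : ∀ x ∈ closure Ω, ∃ U, IsOpen U ∧ x ∈ U ∧ P (U ∩ Ω)) : P Ω := by
  obtain ⟨⟨x₁, hx₁⟩, hpre⟩ := hconn
  have hchain : ∀ y ∈ Ω, ∃ V, IsOpen V ∧ V ⊆ Ω ∧ x₁ ∈ V ∧ y ∈ V ∧ P V := fun y hy =>
    exists_isOpen_of_isPreconnected hΩ hpre hunion (fun x hx => hlocal x (subset_closure hx)) hx₁ hy
  suffices h : ∃ V, IsOpen V ∧ V ⊆ Ω ∧ x₁ ∈ V ∧ closure Ω ∩ Ω ⊆ V ∧ P V by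
    obtain ⟨V, -, hVΩ, -, hΩV, hPV⟩ := h
    rw [inter_eq_self_of_subset_right subset_closure] at hΩV
    rwa [← hVΩ.antisymm hΩV]
  refine hcpt.induction_on
    (p := fun A => ∃ V, IsOpen V ∧ V ⊆ Ω ∧ x₁ ∈ V ∧ A ∩ Ω ⊆ V ∧ P V) ?_ ?_ ?_ fun x hx => ?_
  · obtain ⟨V, hV, hVΩ, hxV, -, hPV⟩ := hchain x₁ hx₁
    exact ⟨V, hV, hVΩ, hxV, by rw [empty_inter]; exact empty_subset V, hPV⟩
  · rintro A B hAB ⟨V, hV, hVΩ, hxV, hBV, hPV⟩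
    exact ⟨V, hV, hVΩ, hxV, (inter_subset_inter_left _ hAB).trans hBV, hPV⟩
  · rintro A B ⟨V, hV, hVΩ, hxV, hAV, hPV⟩ ⟨W, hW, hWΩ, hxW, hBW, hPW⟩
    refine ⟨V ∪ W, hV.union hW, union_subset hVΩ hWΩ, Or.inl hxV, ?_,
      hunion V W hV hW hVΩ hWΩ ⟨x₁, hxV, hxW⟩ hPV hPW⟩
    exact union_inter_distrib_right A B Ω ▸ union_subset_union hAV hBW
  · obtain ⟨U, hU, hxU, hPU⟩ := hlocal x hx
    obtain ⟨y, hyU, hyΩ⟩ := mem_closure_iff.1 hx U hU hxU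
    obtain ⟨V, hV, hVΩ, hxV, hyV, hPV⟩ := hchain y hyΩ
    exact ⟨U, mem_nhdsWithin_of_mem_nhds (hU.mem_nhds hxU), V ∪ U ∩ Ω, hV.union (hU.inter hΩ),
      union_subset hVΩ inter_subset_right, Or.inl hxV, subset_union_right,
      hunion V (U ∩ Ω) hV (hU.inter hΩ) hVΩ inter_subset_right ⟨y, hyV, hyU, hyΩ⟩ hPV hPU⟩

lemma cauchyModConst_of_isConnected {ι : Type*} [MeasurableSpace Y] [BorelSpace Y]
    {ν : Measure Y} [SFinite ν] [ν.IsOpenPosMeasure] {𝓕 : Filter ι} {u : ι → Y → ℝ}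
    (hu : ∀ i, Measurable (u i)) (hΩ : IsOpen Ω) (hconn : IsConnected Ω)
    (hcpt : IsCompact (closure Ω)) (hfin : ν Ω ≠ ⊤)
    (hlocal : ∀ x ∈ closure Ω, ∃ U, IsOpen U ∧ x ∈ U ∧ CauchyModConst 𝓕 ν u (U ∩ Ω)) :
    CauchyModConst 𝓕 ν u Ω :=
  property_of_isConnected_of_local hΩ hconn hcpt
    (fun _ _ hV hW hVΩ hWΩ hne => CauchyModConst.union hu (measure_ne_top_of_subset hVΩ hfin)
      (measure_ne_top_of_subset hWΩ hfin) ((hV.inter hW).measure_pos ν hne).ne') hlocal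

end Gluing

section MeanZeroLimits

variable {X : Type*} [MeasurableSpace X] {μ : Measure X} {V : Set X}

lemma lintegral_ofReal_sq_eq_eLpNorm_sq (f : X → ℝ) :
    ∫⁻ x, ENNReal.ofReal (f x ^ 2) ∂μ = eLpNorm f 2 μ ^ 2 := by
  have h := eLpNorm_nnreal_pow_eq_lintegral (μ := μ) (f := f) (two_ne_zero (α := ℝ≥0))
  simp only [NNReal.coe_ofNat, ENNReal.rpow_ofNat, ENNReal.coe_ofNat] at h
  rw [h]
  refine lintegral_congr fun x => ?_
  rw [← ofReal_norm, ← ENNReal.ofReal_pow (norm_nonneg _), Real.norm_eq_abs, sq_abs]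

lemma memLp_two_iff_lintegral_ofReal_sq_lt_top {f : X → ℝ} (hf : AEStronglyMeasurable f μ) :
    MemLp f 2 μ ↔ ∫⁻ x, ENNReal.ofReal (f x ^ 2) ∂μ < ⊤ := by
  rw [lintegral_ofReal_sq_eq_eLpNorm_sq, ENNReal.pow_lt_top_iff, or_iff_left two_ne_zero]
  exact and_iff_right hf

lemma tendsto_integral_of_tendsto_eLpNorm [IsFiniteMeasure μ] {ι : Type*} {𝓕 : Filter ι}
    {p : ℝ≥0∞} (hp : 1 ≤ p) {u : ι → X → ℝ} {w : X → ℝ} (hu : ∀ i, MemLp (u i) p μ)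
    (hw : MemLp w p μ) (h : Tendsto (fun i => eLpNorm (u i - w) p μ) 𝓕 (𝓝 0)) :
    Tendsto (fun i => ∫ x, u i x ∂μ) 𝓕 (𝓝 (∫ x, w x ∂μ)) := by
  refine tendsto_integral_of_L1' w hw.1
    (Eventually.of_forall fun i => (hu i).integrable hp) ?_
  have hq : 0 ≤ 1 / (1 : ℝ≥0∞).toReal - 1 / p.toReal := by
    rcases eq_or_ne p ⊤ with rfl | hp'
    · simp only [ENNReal.toReal_one, ENNReal.toReal_top, div_zero, sub_zero, div_one, zero_le_one]
    · have h1 : 1 ≤ p.toReal := ENNReal.toReal_one ▸ ENNReal.toReal_mono hp' hp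
      rw [ENNReal.toReal_one, div_one, sub_nonneg]
      exact div_le_one_of_le₀ h1 (zero_le_one.trans h1)
  have hlim := ENNReal.Tendsto.mul_const h (Or.inr (ENNReal.rpow_ne_top_of_nonneg hq
    (measure_ne_top μ univ)))
  rw [zero_mul] at hlim
  exact tendsto_of_tendsto_of_tendsto_of_le_of_le tendsto_const_nhds hlim (fun _ => zero_le)
    fun i => eLpNorm_le_eLpNorm_mul_rpow_measure_univ hp ((hu i).sub hw).1

lemma exists_tendsto_eLpNorm_of_cauchy {ι : Type*} {𝓕 : Filter ι} [NeBot 𝓕] {p : ℝ≥0∞}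
    [Fact (1 ≤ p)] {u : ι → X → ℝ} (hu : ∀ i, MemLp (u i) p μ)
    (h : Tendsto (fun q : ι × ι => eLpNorm (u q.1 - u q.2) p μ) (𝓕 ×ˢ 𝓕) (𝓝 0)) :
    ∃ w, Measurable w ∧ MemLp w p μ ∧ Tendsto (fun i => eLpNorm (u i - w) p μ) 𝓕 (𝓝 0) := by
  have hcauchy : Cauchy (map (fun i => (hu i).toLp (u i)) 𝓕) := by
    refine cauchy_map_iff.2 ⟨‹_›, uniformity_basis_edist_le.tendsto_right_iff.2 fun ε hε => ?_⟩
    filter_upwards [ENNReal.tendsto_nhds_zero.1 h ε hε] with q hq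
    simpa only [mem_ofPred_eq, Lp.edist_toLp_toLp] using hq
  obtain ⟨W, hW⟩ := CompleteSpace.complete hcauchy
  refine ⟨W, (Lp.stronglyMeasurable W).measurable, Lp.memLp W, ?_⟩
  refine (Lp.tendsto_Lp_iff_tendsto_eLpNorm'' u hu W (Lp.memLp W)).1 ?_
  rwa [Lp.toLp_coeFn]

variable [SFinite μ] {v : X → ℝ}

lemma measure_mul_eLpNorm_sq_le_diffEnergy (hV : μ V ≠ ⊤) (hv : Measurable v)
    (hvV : IntegrableOn v V μ) (h0 : ∫ x in V, v x ∂μ = 0) :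
    μ V * eLpNorm v 2 (μ.restrict V) ^ 2 ≤ diffEnergy μ (V ×ˢ V) v := by
  have : IsFiniteMeasure (μ.restrict V) := ⟨by rwa [Measure.restrict_apply_univ, lt_top_iff_ne_top]⟩
  rw [diffEnergy_prod V V hv, ← lintegral_ofReal_sq_eq_eLpNorm_sq,
    ← lintegral_const_mul _ (by fun_prop)]
  refine lintegral_mono fun x => ?_
  have hjensen := measure_univ_mul_average_sq_le ((integrable_const (v x)).sub hvV)
  rcases eq_or_ne (μ V) 0 with hV0 | hV0
  · simp only [hV0, zero_mul, zero_le]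
  have : NeZero (μ.restrict V) := ⟨by simpa only [ne_eq, Measure.restrict_eq_zero] using hV0⟩
  have havg : ⨍ y in V, ((fun _ => v x) - v : X → ℝ) y ∂μ = v x := by
    rw [average_eq, integral_sub' (integrable_const _) hvV, h0, sub_zero, ← average_eq,
      average_const]
  rwa [havg, Measure.restrict_apply_univ] at hjensen

lemma diffEnergy_prod_self_le (hv : Measurable v) :
    diffEnergy μ (V ×ˢ V) v ≤ 4 * μ V * eLpNorm v 2 (μ.restrict V) ^ 2 := by
  rw [← lintegral_ofReal_sq_eq_eLpNorm_sq]
  calc diffEnergy μ (V ×ˢ V) v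
      ≤ ∫⁻ x in V, ∫⁻ y in V,
          (2 * ENNReal.ofReal (v x ^ 2) + 2 * ENNReal.ofReal (v y ^ 2)) ∂μ ∂μ := by
        rw [diffEnergy_prod V V hv]
        refine lintegral_mono fun x => lintegral_mono fun y => ?_
        simpa only [sub_zero] using ofReal_sub_sq_le_two (v x) (v y) 0
    _ = ∫⁻ x in V, (2 * μ V * ENNReal.ofReal (v x ^ 2) +
          2 * ∫⁻ y in V, ENNReal.ofReal (v y ^ 2) ∂μ) ∂μ := by
        refine lintegral_congr fun x => ?_
        rw [lintegral_add_left measurable_const, setLIntegral_const,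
          lintegral_const_mul _ (by fun_prop), mul_right_comm]
    _ = 4 * μ V * ∫⁻ x in V, ENNReal.ofReal (v x ^ 2) ∂μ := by
        rw [lintegral_add_left (by fun_prop), lintegral_const_mul _ (by fun_prop),
          setLIntegral_const]
        ring

lemma CauchyModConst.tendsto_eLpNorm_sub {ι : Type*} {𝓕 : Filter ι} {u : ι → X → ℝ}
    (h : CauchyModConst 𝓕 μ u V) (hV0 : μ V ≠ 0) (hV : μ V ≠ ⊤) (hu : ∀ i, Measurable (u i))
    (huV : ∀ i, IntegrableOn (u i) V μ) (hmean : ∀ i, ∫ x in V, u i x ∂μ = 0) :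
    Tendsto (fun p : ι × ι => eLpNorm (u p.1 - u p.2) 2 (μ.restrict V)) (𝓕 ×ˢ 𝓕) (𝓝 0) := by
  refine ENNReal.tendsto_nhds_zero.2 fun ε hε => ?_
  have hε' : 0 < μ V * ε ^ 2 := ENNReal.mul_pos hV0 (ENNReal.pow_pos hε 2).ne'
  filter_upwards [ENNReal.tendsto_nhds_zero.1 h _ hε'] with p hp
  have hle := (measure_mul_eLpNorm_sq_le_diffEnergy hV ((hu p.1).sub (hu p.2))
    ((huV _).sub (huV _)) (by rw [integral_sub' (huV _) (huV _), hmean, hmean, sub_zero])).trans hp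
  rwa [ENNReal.mul_le_mul_iff_right hV0 hV, ENNReal.pow_le_pow_left_iff two_ne_zero] at hle

lemma CauchyModConst.exists_tendsto_eLpNorm {ι : Type*} {𝓕 : Filter ι} [NeBot 𝓕]
    {u : ι → X → ℝ} (h : CauchyModConst 𝓕 μ u V) (hV0 : μ V ≠ 0) (hV : μ V ≠ ⊤)
    (hu : ∀ i, Measurable (u i)) (huV : ∀ i, MemLp (u i) 2 (μ.restrict V))
    (hmean : ∀ i, ∫ x in V, u i x ∂μ = 0) :
    ∃ w, Measurable w ∧ MemLp w 2 (μ.restrict V) ∧ ∫ x in V, w x ∂μ = 0 ∧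
      Tendsto (fun i => eLpNorm (u i - w) 2 (μ.restrict V)) 𝓕 (𝓝 0) := by
  have : IsFiniteMeasure (μ.restrict V) := ⟨by rwa [Measure.restrict_apply_univ, lt_top_iff_ne_top]⟩
  obtain ⟨w, hwm, hw, hlim⟩ := exists_tendsto_eLpNorm_of_cauchy huV
    (h.tendsto_eLpNorm_sub hV0 hV hu (fun i => (huV i).integrable one_le_two) hmean)
  have hint := tendsto_integral_of_tendsto_eLpNorm one_le_two huV hw hlim
  simp only [hmean] at hint
  exact ⟨w, hwm, hw, tendsto_nhds_unique hint tendsto_const_nhds, hlim⟩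

end MeanZeroLimits

section InteriorPairs

variable {E : Type*} [NormedAddCommGroup E]

/-- The pairs of points, one of which is closer to the other than to the complement of `Ω`. They
form a midpoint-stable subset of `Ω ×ˢ Ω` containing every close pair of points of a compact
subset of an open `Ω`. -/
def interiorPairs (Ω : Set E) : Set (E × E) :=
  {q | edist q.1 q.2 < Metric.infEDist q.1 Ωᶜ ∨ edist q.1 q.2 < Metric.infEDist q.2 Ωᶜ}

lemma interiorPairs_subset (Ω : Set E) : interiorPairs Ω ⊆ Ω ×ˢ Ω := by
  have hmem : ∀ x y : E, edist x y < Metric.infEDist x Ωᶜ → x ∈ Ω ∧ y ∈ Ω := fun x y h => by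
    refine ⟨by_contra fun hx => ?_, by_contra fun hy => ?_⟩
    · exact not_lt_zero (h.trans_eq (Metric.infEDist_zero_of_mem hx))
    · exact h.not_ge (Metric.infEDist_le_edist_of_mem hy)
  rintro ⟨x, y⟩ (h | h)
  · exact hmem x y h
  · exact (hmem y x (edist_comm x y ▸ h)).symm

variable [NormedSpace ℝ E] [FiniteDimensional ℝ E] [MeasurableSpace E] [BorelSpace E]

lemma midpointStable_interiorPairs (Ω : Set E) : MidpointStable (interiorPairs Ω) where
  measurableSet :=
    have := FiniteDimensional.proper_real E
    ((isOpen_lt (by fun_prop) (Metric.continuous_infEDist.comp continuous_fst)).union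
      (isOpen_lt (by fun_prop) (Metric.continuous_infEDist.comp continuous_snd))).measurableSet
  swap_mem x y h := by
    rcases h with h | h
    · exact Or.inr ((edist_comm y x).trans_lt h)
    · exact Or.inl ((edist_comm y x).trans_lt h)
  midpoint_mem x y h := by
    have hhalf : edist x (midpoint ℝ x y) + edist y (midpoint ℝ x y) = edist x y := by
      simp only [edist_dist, dist_left_midpoint, dist_right_midpoint, Real.norm_ofNat]
      rw [← ENNReal.ofReal_add (by positivity) (by positivity)]
      congr 1
      ring
    rcases h with h | h
    · exact Or.inl ((hhalf ▸ le_self_add).trans_lt h)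
    · refine Or.inr (lt_of_not_ge fun hle => h.not_ge ?_)
      calc Metric.infEDist y Ωᶜ
          ≤ Metric.infEDist (midpoint ℝ x y) Ωᶜ + edist y (midpoint ℝ x y) :=
            Metric.infEDist_le_infEDist_add_edist
        _ ≤ edist x (midpoint ℝ x y) + edist y (midpoint ℝ x y) := by gcongr
        _ = edist x y := hhalf

/-- The function `w` has `L²` increments of order one in `Ω`: the energy of the interior pairs at
distance less than `r` is at most `K r ^ (n + 2)`. -/
def HasL2Increments (μ : Measure E) (Ω : Set E) (K : ℝ≥0∞) (w : E → ℝ) : Prop :=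
  ∀ r : ℝ, 0 < r → diffEnergy μ (interiorPairs Ω ∩ nearDiag E r) w ≤
    ENNReal.ofReal (r ^ (Module.finrank ℝ E + 2)) * K

variable {μ : Measure E} {Ω : Set E} {w : E → ℝ}

lemma HasL2Increments.indicator {K : ℝ≥0∞} (h : HasL2Increments μ Ω K w) :
    HasL2Increments μ Ω K (Ω.indicator w) := fun r hr => by
  refine (setLIntegral_mono' ?_ fun q hq => ?_).trans (h r hr)
  · exact (midpointStable_interiorPairs Ω).measurableSet.inter (measurableSet_nearDiag r)
  · have hmem := interiorPairs_subset Ω hq.1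
    rw [indicator_of_mem hmem.1, indicator_of_mem hmem.2]

lemma BBMBounded.hasL2Increments_of_tendsto [μ.IsAddHaarMeasure] [Nontrivial E] {ι : Type*}
    {𝓕 : Filter ι} [NeBot 𝓕] {s₀ : ℝ} {C : ℝ≥0∞} {σ : ι → ℝ} {u : ι → E → ℝ}
    (h : BBMBounded μ s₀ C σ u Ω) (hs₀ : 0 < s₀) (hC : C ≠ ⊤) (hΩ : μ Ω ≠ ⊤)
    (hσ : Tendsto σ 𝓕 (𝓝 1)) (hw : Measurable w)
    (hlim : Tendsto (fun i => eLpNorm (u i - w) 2 (μ.restrict Ω)) 𝓕 (𝓝 0)) :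
    HasL2Increments μ Ω (16 * C) w := fun r hr => by
  set n := Module.finrank ℝ E
  set A := interiorPairs Ω ∩ nearDiag E r
  have hle : ∀ i, diffEnergy μ A w ≤ 2 * (ENNReal.ofReal (8 * r ^ (n + 2 * σ i)) * C) +
      2 * (4 * μ Ω * eLpNorm (u i - w) 2 (μ.restrict Ω) ^ 2) := fun i => by
    have hsub := diffEnergy_sub_le (μ := μ) (w := u i - w) (h.measurable i) A
    rw [sub_sub_cancel] at hsub
    refine hsub.trans ?_
    gcongr
    · exact h.diffEnergy_nearDiag_le hs₀ (midpointStable_interiorPairs Ω)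
        (interiorPairs_subset Ω) hr i
    · exact (diffEnergy_mono (inter_subset_left.trans (interiorPairs_subset Ω)) _).trans
        (diffEnergy_prod_self_le ((h.measurable i).sub hw))
  have hpow : Tendsto (fun i => ENNReal.ofReal (8 * r ^ (n + 2 * σ i))) 𝓕
      (𝓝 (ENNReal.ofReal (8 * r ^ (n + 2 * 1 : ℝ)))) :=
    ENNReal.tendsto_ofReal ((tendsto_const_nhds.rpow ((hσ.const_mul 2).const_add (n : ℝ))
      (Or.inl hr.ne')).const_mul 8)
  have herr := ENNReal.Tendsto.const_mul (a := 4 * μ Ω) (ENNReal.Tendsto.pow (n := 2) hlim)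
    (Or.inr (ENNReal.mul_ne_top ENNReal.ofNat_ne_top hΩ))
  refine (ge_of_tendsto' ((ENNReal.Tendsto.const_mul (ENNReal.Tendsto.mul_const hpow
    (Or.inr hC)) (Or.inr ENNReal.ofNat_ne_top)).add
      (ENNReal.Tendsto.const_mul herr (Or.inr ENNReal.ofNat_ne_top))) hle).trans_eq ?_
  rw [mul_one, ← Nat.cast_ofNat (R := ℝ) (n := 2), ← Nat.cast_add, Real.rpow_natCast,
    ENNReal.ofReal_mul (by norm_num), ENNReal.ofReal_ofNat]
  ring

end InteriorPairs

section DifferenceQuotients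

lemma ofReal_integral_mul_sq_le {X : Type*} [MeasurableSpace X] {μ : Measure X} {f g : X → ℝ}
    (hf : AEStronglyMeasurable f μ) (hg : AEStronglyMeasurable g μ) :
    ENNReal.ofReal ((∫ x, f x * g x ∂μ) ^ 2) ≤
      (∫⁻ x, ENNReal.ofReal (f x ^ 2) ∂μ) * ∫⁻ x, ENNReal.ofReal (g x ^ 2) ∂μ := by
  have hholder : eLpNorm (f • g) 1 μ ≤ eLpNorm f 2 μ * eLpNorm g 2 μ :=
    eLpNorm_smul_le_mul_eLpNorm hg hf
  have habs : ENNReal.ofReal |∫ x, f x * g x ∂μ| ≤ eLpNorm (f • g) 1 μ := by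
    rw [eLpNorm_one_eq_lintegral_enorm, ← Real.norm_eq_abs, ofReal_norm]
    exact enorm_integral_le_lintegral_enorm _
  rw [lintegral_ofReal_sq_eq_eLpNorm_sq, lintegral_ofReal_sq_eq_eLpNorm_sq, ← mul_pow, ← sq_abs,
    ENNReal.ofReal_pow (abs_nonneg _)]
  exact pow_le_pow_left₀ zero_le (habs.trans hholder) 2

variable {E : Type*} [NormedAddCommGroup E] [NormedSpace ℝ E] [MeasurableSpace E]
  [BorelSpace E] {μ : Measure E} [μ.IsAddHaarMeasure]

variable {w φ : E → ℝ}

lemma integral_differenceQuotient_mul (hw : Integrable w μ) (hφ : Continuous φ)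
    (hφc : HasCompactSupport φ) (t : ℝ) (v : E) :
    ∫ x, (t⁻¹ • (φ (x + t • v) - φ x)) * w x ∂μ =
      ∫ x, (t⁻¹ • (w (x + t • -v) - w x)) * φ x ∂μ := by
  obtain ⟨M, hM⟩ := hφ.bounded_above_of_compact_support hφc
  have hshift : ∫ x, φ (x + t • v) * w x ∂μ = ∫ x, w (x + t • -v) * φ x ∂μ := by
    rw [← integral_add_right_eq_self _ (t • -v)]
    simp only [smul_neg, neg_add_cancel_right, mul_comm]
  have hwφ : Integrable (fun x => w x * φ x) μ :=
    hw.mul_bdd hφ.aestronglyMeasurable (ae_of_all _ hM)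
  have hφw : Integrable (fun x => φ (x + t • v) * w x) μ :=
    hw.bdd_mul (Continuous.aestronglyMeasurable (by fun_prop)) (ae_of_all _ fun x => hM _)
  have hwφ' : Integrable (fun x => w (x + t • -v) * φ x) μ :=
    (hw.comp_add_right (t • -v)).mul_bdd hφ.aestronglyMeasurable (ae_of_all _ hM)
  simp only [smul_eq_mul, mul_assoc, integral_const_mul, sub_mul]
  rw [integral_sub hφw (by simpa only [mul_comm] using hwφ), integral_sub hwφ' hwφ, hshift]
  simp only [mul_comm]

variable [FiniteDimensional ℝ E]

lemma setAverage_ball_continuousLinearMap (L : StrongDual ℝ E) (e : E) {ρ : ℝ} (hρ : 0 < ρ) :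
    ⨍ h in Metric.ball e ρ, L h ∂μ = L e := by
  have := FiniteDimensional.proper_real E
  have hint : IntegrableOn L (Metric.ball e ρ) μ :=
    (L.continuous.continuousOn.integrableOn_compact (isCompact_closedBall e ρ)).mono_set
      Metric.ball_subset_closedBall
  have hpre : (fun h => e + e - h) ⁻¹' Metric.ball e ρ = Metric.ball e ρ := by
    ext h
    rw [mem_preimage, mem_ball_iff_norm, mem_ball_iff_norm', add_sub_right_comm,
      add_sub_cancel_right]
  -- The reflection in the point `e` preserves the ball and the measure.
  have hrefl := (Measure.measurePreserving_sub_left μ (e + e)).setIntegral_preimage_emb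
    (Homeomorph.subLeft (e + e)).measurableEmbedding L (Metric.ball e ρ)
  simp only [hpre, map_sub, map_add] at hrefl
  have hconst : IntegrableOn (fun _ => L e + L e) (Metric.ball e ρ) μ :=
    integrableOn_const measure_ball_lt_top.ne
  rw [integral_sub hconst hint, setIntegral_const, smul_eq_mul] at hrefl
  have hpos : 0 < μ.real (Metric.ball e ρ) :=
    ENNReal.toReal_pos (Metric.measure_ball_pos μ e hρ).ne' measure_ball_lt_top.ne
  rw [setAverage_eq, smul_eq_mul, inv_mul_eq_iff_eq_mul₀ hpos.ne']
  linarith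

lemma lintegral_lintegral_comp_add_smul {r : ℝ} (hr : 0 < r) {Ψ : E × E → ℝ≥0∞}
    (hΨ : Measurable Ψ) :
    ∫⁻ v, ∫⁻ y, Ψ (y, y + r • v) ∂μ ∂μ =
      ENNReal.ofReal ((r ^ Module.finrank ℝ E)⁻¹) * ∫⁻ q, Ψ q ∂μ.prod μ := by
  rw [lintegral_lintegral_swap (by unfold Function.uncurry; fun_prop),
    lintegral_prod _ hΨ.aemeasurable, ← lintegral_const_mul _ hΨ.lintegral_prod_right']
  exact lintegral_congr fun y => lintegral_comp_add_smul y hr (h := fun z => Ψ (y, z)) (by fun_prop)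

variable {Ω : Set E} {K : ℝ≥0∞}

lemma HasL2Increments.lintegral_differenceQuotient_le (h : HasL2Increments μ Ω K w)
    (hw : Measurable w) {k : Set E} (hk : MeasurableSet k) {r R : ℝ} (hr : 0 < r) (hR : 0 < R)
    (hkr : ∀ y ∈ k, ENNReal.ofReal (r * R) < Metric.infEDist y Ωᶜ) :
    ∫⁻ v in Metric.ball 0 R, ∫⁻ y in k, ENNReal.ofReal ((r⁻¹ • (w (y + r • v) - w y)) ^ 2) ∂μ ∂μ ≤
      ENNReal.ofReal (R ^ (Module.finrank ℝ E + 2)) * K := by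
  set A := interiorPairs Ω ∩ nearDiag E (r * R)
  have hA : MeasurableSet A :=
    (midpointStable_interiorPairs Ω).measurableSet.inter (measurableSet_nearDiag _)
  set Ψ : E × E → ℝ≥0∞ := A.indicator fun q => ENNReal.ofReal ((r⁻¹ • (w q.2 - w q.1)) ^ 2) with hΨ
  have hΨm : Measurable Ψ := (by fun_prop : Measurable _).indicator hA
  have hle : ∀ v ∈ Metric.ball (0 : E) R, ∀ y ∈ k,
      ENNReal.ofReal ((r⁻¹ • (w (y + r • v) - w y)) ^ 2) ≤ Ψ (y, y + r • v) := fun v hv y hy => by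
    have hdist : ‖y - (y + r • v)‖ < r * R := by
      rw [sub_add_cancel_left, norm_neg, norm_smul, Real.norm_of_nonneg hr.le]
      exact mul_lt_mul_of_pos_left (mem_ball_zero_iff.1 hv) hr
    have hmem : (y, y + r • v) ∈ A := by
      refine ⟨Or.inl (lt_trans ?_ (hkr y hy)), hdist⟩
      rw [edist_dist, dist_eq_norm]
      exact (ENNReal.ofReal_lt_ofReal_iff (by positivity)).2 hdist
    rw [hΨ, indicator_of_mem hmem]
  calc _ ≤ ∫⁻ v in Metric.ball 0 R, ∫⁻ y in k, Ψ (y, y + r • v) ∂μ ∂μ :=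
        setLIntegral_mono' measurableSet_ball fun v hv => setLIntegral_mono' hk (hle v hv)
    _ ≤ ∫⁻ v, ∫⁻ y, Ψ (y, y + r • v) ∂μ ∂μ :=
        (setLIntegral_le_lintegral _ _).trans
          (lintegral_mono fun v => setLIntegral_le_lintegral _ _)
    _ = ENNReal.ofReal ((r ^ Module.finrank ℝ E)⁻¹) *
          (ENNReal.ofReal (r⁻¹ ^ 2) * diffEnergy μ A w) := by
        rw [lintegral_lintegral_comp_add_smul hr hΨm, hΨ, lintegral_indicator hA, diffEnergy]
        refine congrArg _ ?_
        rw [← lintegral_const_mul _ (by fun_prop)]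
        refine lintegral_congr fun q => ?_
        rw [smul_eq_mul, mul_pow, ENNReal.ofReal_mul (sq_nonneg _), sub_sq_comm]
    _ ≤ ENNReal.ofReal ((r ^ Module.finrank ℝ E)⁻¹) * (ENNReal.ofReal (r⁻¹ ^ 2) *
          (ENNReal.ofReal ((r * R) ^ (Module.finrank ℝ E + 2)) * K)) := by
        gcongr
        exact h (r * R) (by positivity)
    _ = _ := by
        rw [← mul_assoc, ← mul_assoc, ← ENNReal.ofReal_mul (by positivity),
          ← ENNReal.ofReal_mul (by positivity)]
        congr 2
        field_simp
        ring

end DifferenceQuotients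

section WeakDerivative

lemma eventually_ofReal_mul_lt_infEDist_compl {X : Type*} [PseudoEMetricSpace X] {k Ω : Set X}
    (hk : IsCompact k) (hΩ : IsOpen Ω) (hkΩ : k ⊆ Ω) (R : ℝ) :
    ∀ᶠ r : ℝ in 𝓝[>] 0, ∀ y ∈ k, ENNReal.ofReal (r * R) < Metric.infEDist y Ωᶜ := by
  obtain ⟨δ, hδ, hlt⟩ := Metric.exists_pos_forall_lt_edist hk hΩ.isClosed_compl
    (disjoint_compl_right_iff_subset.2 hkΩ)
  have hlim : Tendsto (fun r : ℝ => ENNReal.ofReal (r * R)) (𝓝[>] 0) (𝓝 0) := by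
    have hcont : Continuous fun r : ℝ => ENNReal.ofReal (r * R) :=
      ENNReal.continuous_ofReal.comp (by fun_prop)
    simpa only [zero_mul, ENNReal.ofReal_zero] using (hcont.tendsto 0).mono_left nhdsWithin_le_nhds
  filter_upwards [hlim.eventually_lt_const (ENNReal.coe_pos.2 hδ)] with r hr y hy
  exact hr.trans_le (Metric.le_infEDist.2 fun z hz => (hlt y hy z hz).le)

variable {E : Type*} [NormedAddCommGroup E] [NormedSpace ℝ E] [FiniteDimensional ℝ E]
  [MeasurableSpace E] [BorelSpace E] {μ : Measure E} [μ.IsAddHaarMeasure]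

variable {w φ : E → ℝ}

lemma tendsto_integral_differenceQuotient_mul (hw : Integrable w μ) (hφ : ContDiff ℝ 1 φ)
    (hφc : HasCompactSupport φ) (v : E) :
    Tendsto (fun r : ℝ => ∫ x, (r⁻¹ • (w (x + r • v) - w x)) * φ x ∂μ) (𝓝[>] 0)
      (𝓝 (-∫ x, w x * fderiv ℝ φ x v ∂μ)) := by
  obtain ⟨L, hL⟩ := ContDiff.lipschitzWith_of_hasCompactSupport hφc hφ one_ne_zero
  have hlim := hL.integral_inv_smul_sub_mul_tendsto_integral_lineDeriv_mul hw (-v)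
  simp only [(hφ.differentiable one_ne_zero _).lineDeriv_eq_fderiv, map_neg, neg_mul, integral_neg,
    integral_differenceQuotient_mul hw hφ.continuous hφc, neg_neg] at hlim
  simpa only [mul_comm] using hlim

variable {Ω : Set E} {K : ℝ≥0∞}

lemma HasL2Increments.lintegral_sq_integral_differenceQuotient_mul_le
    (h : HasL2Increments μ Ω K w) (hw : Measurable w) (hφ : Continuous φ) {r R : ℝ} (hr : 0 < r)
    (hR : 0 < R) (hφr : ∀ y ∈ tsupport φ, ENNReal.ofReal (r * R) < Metric.infEDist y Ωᶜ) :
    ∫⁻ v in Metric.ball 0 R,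
        ENNReal.ofReal ((∫ x, (r⁻¹ • (w (x + r • v) - w x)) * φ x ∂μ) ^ 2) ∂μ ≤
      ENNReal.ofReal (R ^ (Module.finrank ℝ E + 2)) * K *
        ∫⁻ x in tsupport φ, ENNReal.ofReal (φ x ^ 2) ∂μ := by
  have hk : MeasurableSet (tsupport φ) := (isClosed_tsupport φ).measurableSet
  have hpair : ∀ v, ENNReal.ofReal ((∫ x, (r⁻¹ • (w (x + r • v) - w x)) * φ x ∂μ) ^ 2) ≤
      (∫⁻ x in tsupport φ, ENNReal.ofReal ((r⁻¹ • (w (x + r • v) - w x)) ^ 2) ∂μ) *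
        ∫⁻ x in tsupport φ, ENNReal.ofReal (φ x ^ 2) ∂μ := fun v => by
    rw [← setIntegral_eq_integral_of_forall_compl_eq_zero (s := tsupport φ) fun x hx => by
      rw [image_eq_zero_of_notMem_tsupport hx, mul_zero]]
    exact ofReal_integral_mul_sq_le (Measurable.aestronglyMeasurable (by fun_prop))
      hφ.aestronglyMeasurable
  calc _ ≤ ∫⁻ v in Metric.ball 0 R,
        (∫⁻ x in tsupport φ, ENNReal.ofReal ((r⁻¹ • (w (x + r • v) - w x)) ^ 2) ∂μ) *
          ∫⁻ x in tsupport φ, ENNReal.ofReal (φ x ^ 2) ∂μ ∂μ := lintegral_mono hpair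
    _ = (∫⁻ v in Metric.ball 0 R, ∫⁻ x in tsupport φ,
          ENNReal.ofReal ((r⁻¹ • (w (x + r • v) - w x)) ^ 2) ∂μ ∂μ) *
          ∫⁻ x in tsupport φ, ENNReal.ofReal (φ x ^ 2) ∂μ :=
        lintegral_mul_const _ (Measurable.lintegral_prod_right' (f := fun p : E × E =>
          ENNReal.ofReal ((r⁻¹ • (w (p.2 + r • p.1) - w p.2)) ^ 2)) (by fun_prop))
    _ ≤ _ := by
        gcongr
        exact h.lintegral_differenceQuotient_le hw hk hr hR hφr

lemma HasL2Increments.lintegral_sq_integral_mul_fderiv_le (h : HasL2Increments μ Ω K w)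
    (hw : Measurable w) (hwi : Integrable w μ) (hΩ : IsOpen Ω) (hφ : ContDiff ℝ 1 φ)
    (hφc : HasCompactSupport φ) (hφΩ : tsupport φ ⊆ Ω) {R : ℝ} (hR : 0 < R) :
    ∫⁻ v in Metric.ball 0 R, ENNReal.ofReal ((∫ x, w x * fderiv ℝ φ x v ∂μ) ^ 2) ∂μ ≤
      ENNReal.ofReal (R ^ (Module.finrank ℝ E + 2)) * K *
        ∫⁻ x in Ω, ENNReal.ofReal (φ x ^ 2) ∂μ := by
  set Q : ℝ → E → ℝ := fun r v => ∫ x, (r⁻¹ • (w (x + r • v) - w x)) * φ x ∂μ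
  have hQm : ∀ r, Measurable (Q r) := fun r =>
    (StronglyMeasurable.integral_prod_right (f := fun v x => (r⁻¹ • (w (x + r • v) - w x)) * φ x)
      (Measurable.stronglyMeasurable (by have := hφ.continuous.measurable; fun_prop))).measurable
  have hlim : ∀ v, Tendsto (fun r => ENNReal.ofReal (Q r v ^ 2)) (𝓝[>] 0)
      (𝓝 (ENNReal.ofReal ((∫ x, w x * fderiv ℝ φ x v ∂μ) ^ 2))) := fun v => by
    rw [← neg_sq]
    exact ENNReal.tendsto_ofReal ((tendsto_integral_differenceQuotient_mul hwi hφ hφc v).pow 2)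
  calc _ = ∫⁻ v in Metric.ball 0 R, liminf (fun r => ENNReal.ofReal (Q r v ^ 2)) (𝓝[>] 0) ∂μ :=
        lintegral_congr fun v => (hlim v).liminf_eq.symm
    _ ≤ liminf (fun r => ∫⁻ v in Metric.ball 0 R, ENNReal.ofReal (Q r v ^ 2) ∂μ) (𝓝[>] 0) :=
        lintegral_liminf_le fun r => by have := hQm r; fun_prop
    _ ≤ _ := by
        refine liminf_le_of_frequently_le' (Eventually.frequently ?_)
        filter_upwards [eventually_ofReal_mul_lt_infEDist_compl hφc hΩ hφΩ R,
          self_mem_nhdsWithin] with r hr hr0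
        exact (h.lintegral_sq_integral_differenceQuotient_mul_le hw hφ.continuous hr0 hR hr).trans
          (mul_le_mul_right (lintegral_mono_set hφΩ) _)

lemma integrable_smul_fderiv {ν : Measure E} (hw : Integrable w ν) (hφ : ContDiff ℝ 1 φ)
    (hφc : HasCompactSupport φ) : Integrable (fun x => w x • fderiv ℝ φ x) ν := by
  have hcont : Continuous (fderiv ℝ φ) := hφ.continuous_fderiv one_ne_zero
  obtain ⟨M, hM⟩ := hcont.bounded_above_of_compact_support (hφc.fderiv ℝ)
  exact hw.smul_bdd M hcont.aestronglyMeasurable (ae_of_all _ hM)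

-- Averaging over the directions in `ball e 1` recovers the direction `e` by linearity.
lemma HasL2Increments.measure_ball_mul_integral_mul_fderiv_sq_le (h : HasL2Increments μ Ω K w)
    (hw : Measurable w) (hwi : Integrable w μ) (hΩ : IsOpen Ω) (hφ : ContDiff ℝ 1 φ)
    (hφc : HasCompactSupport φ) (hφΩ : tsupport φ ⊆ Ω) (e : E) :
    μ (Metric.ball e 1) * ENNReal.ofReal ((∫ x, w x * fderiv ℝ φ x e ∂μ) ^ 2) ≤
      ENNReal.ofReal ((‖e‖ + 1) ^ (Module.finrank ℝ E + 2)) * K *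
        ∫⁻ x in Ω, ENNReal.ofReal (φ x ^ 2) ∂μ := by
  have := FiniteDimensional.proper_real E
  set Λ : StrongDual ℝ E := ∫ x, w x • fderiv ℝ φ x ∂μ
  have hΛ : ∀ v, ∫ x, w x * fderiv ℝ φ x v ∂μ = Λ v := fun v =>
    (ContinuousLinearMap.integral_apply (integrable_smul_fderiv hwi hφ hφc) v).symm
  have hΛi : IntegrableOn Λ (Metric.ball e 1) μ :=
    (Λ.continuous.continuousOn.integrableOn_compact (isCompact_closedBall e 1)).mono_set
      Metric.ball_subset_closedBall
  have : IsFiniteMeasure (μ.restrict (Metric.ball e 1)) :=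
    isFiniteMeasure_restrict.2 measure_ball_lt_top.ne
  calc _ = μ.restrict (Metric.ball e 1) univ *
        ENNReal.ofReal ((⨍ v in Metric.ball e 1, Λ v ∂μ) ^ 2) := by
        rw [hΛ, setAverage_ball_continuousLinearMap Λ e one_pos, Measure.restrict_apply_univ]
    _ ≤ ∫⁻ v in Metric.ball e 1, ENNReal.ofReal (Λ v ^ 2) ∂μ := measure_univ_mul_average_sq_le hΛi
    _ ≤ ∫⁻ v in Metric.ball 0 (‖e‖ + 1), ENNReal.ofReal (Λ v ^ 2) ∂μ :=
        lintegral_mono_set (Metric.ball_subset_ball' (by rw [dist_zero_right, add_comm]))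
    _ ≤ _ := by
        simp only [← hΛ]
        exact h.lintegral_sq_integral_mul_fderiv_le hw hwi hΩ hφ hφc hφΩ (by positivity)

end WeakDerivative

section Riesz

lemma exists_inner_eq_of_ofReal_sq_le {V H : Type*} [AddCommGroup V] [Module ℝ V]
    [NormedAddCommGroup H] [InnerProductSpace ℝ H] [CompleteSpace H] {J : V →ₗ[ℝ] H}
    {Λ : V →ₗ[ℝ] ℝ} {D : ℝ≥0∞} (hD : D ≠ ∞)
    (h : ∀ v, ENNReal.ofReal (Λ v ^ 2) ≤ D * ‖J v‖ₑ ^ 2) : ∃ g : H, ∀ v, Λ v = inner ℝ g (J v) := by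
  have hbound : ∀ v, |Λ v| ≤ √D.toReal * ‖J v‖ := fun v => by
    have hv := ENNReal.toReal_mono (ENNReal.mul_ne_top hD (by finiteness)) (h v)
    rw [ENNReal.toReal_ofReal (sq_nonneg _), ENNReal.toReal_mul, ENNReal.toReal_pow,
      toReal_enorm] at hv
    simpa only [Real.sqrt_mul ENNReal.toReal_nonneg, Real.sqrt_sq (norm_nonneg _)] using
      Real.abs_le_sqrt hv
  have hker : Λ ∈ (LinearMap.ker J).dualAnnihilator := by
    refine (Submodule.mem_dualAnnihilator _).2 fun v hv => abs_nonpos_iff.1 ?_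
    simpa only [LinearMap.mem_ker.1 hv, norm_zero, mul_zero] using hbound v
  rw [← LinearMap.range_dualMap_eq_dualAnnihilator_ker] at hker
  obtain ⟨Λ', rfl⟩ := hker
  let ℓ : StrongDual ℝ (LinearMap.range J) :=
    (Λ'.domRestrict (LinearMap.range J)).mkContinuous (√D.toReal) <| by
      rintro ⟨_, v, rfl⟩
      exact hbound v
  obtain ⟨L, hL, -⟩ := exists_extension_norm_eq (LinearMap.range J) ℓ
  refine ⟨(InnerProductSpace.toDual ℝ H).symm L, fun v => ?_⟩
  rw [InnerProductSpace.toDual_symm_apply]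
  exact (hL ⟨J v, LinearMap.mem_range_self J v⟩).symm

variable {E : Type*} [NormedAddCommGroup E] [NormedSpace ℝ E]

/-- The space `C_c^∞(Ω)` of test functions, as functions on the whole space. -/
def testFunctions (Ω : Set E) : Submodule ℝ (E → ℝ) where
  carrier := {φ | ContDiff ℝ (⊤ : ℕ∞) φ ∧ HasCompactSupport φ ∧ tsupport φ ⊆ Ω}
  add_mem' hφ hψ := ⟨hφ.1.add hψ.1, hφ.2.1.add hψ.2.1,
    (tsupport_add _ _).trans (union_subset hφ.2.2 hψ.2.2)⟩
  zero_mem' := ⟨contDiff_const, HasCompactSupport.zero, by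
    rw [tsupport_zero]
    exact empty_subset Ω⟩
  smul_mem' c φ hφ := ⟨hφ.1.const_smul c, hφ.2.1.smul_left (f := fun _ => c),
    (closure_mono (Function.support_const_smul_subset c φ)).trans hφ.2.2⟩

variable {Ω : Set E} {w φ ψ : E → ℝ}

lemma contDiff_one_of_mem_testFunctions (hφ : φ ∈ testFunctions Ω) : ContDiff ℝ 1 φ :=
  hφ.1.of_le (by exact_mod_cast le_top)

variable [MeasurableSpace E] [BorelSpace E] {μ : Measure E}

lemma memLp_of_mem_testFunctions [IsFiniteMeasureOnCompacts μ] (hφ : φ ∈ testFunctions Ω) :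
    MemLp φ 2 (μ.restrict Ω) :=
  (hφ.1.continuous.memLp_of_hasCompactSupport hφ.2.1).restrict Ω

variable (Ω μ) in
/-- The inclusion of the test functions in `L²(Ω)`. -/
def testFunctionsToLp [IsFiniteMeasureOnCompacts μ] :
    testFunctions Ω →ₗ[ℝ] Lp ℝ 2 (μ.restrict Ω) where
  toFun φ := (memLp_of_mem_testFunctions φ.2).toLp φ.1
  map_add' φ ψ :=
    (memLp_of_mem_testFunctions φ.2).toLp_add (memLp_of_mem_testFunctions ψ.2)
  map_smul' c φ := (memLp_of_mem_testFunctions φ.2).toLp_const_smul c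

variable [FiniteDimensional ℝ E]

lemma integrableOn_mul_fderiv_apply (hw : IntegrableOn w Ω μ) (hφ : φ ∈ testFunctions Ω) (e : E) :
    IntegrableOn (fun x => w x * fderiv ℝ φ x e) Ω μ :=
  (integrable_smul_fderiv hw
    (contDiff_one_of_mem_testFunctions hφ) hφ.2.1).apply_continuousLinearMap e

/-- Minus the distributional derivative of `w` in the direction `e`, as the functional
`φ ↦ ∫_Ω w ∂_e φ` on test functions. -/
def weakDerivFunctional (hw : IntegrableOn w Ω μ) (e : E) : testFunctions Ω →ₗ[ℝ] ℝ where
  toFun φ := ∫ x in Ω, w x * fderiv ℝ φ.1 x e ∂μ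
  map_add' φ ψ := by
    rw [← integral_add (integrableOn_mul_fderiv_apply hw φ.2 e)
      (integrableOn_mul_fderiv_apply hw ψ.2 e)]
    refine integral_congr_ae (ae_of_all _ fun x => ?_)
    simp only [Submodule.coe_add, fderiv_add (φ.2.1.differentiable (by simp) x)
      (ψ.2.1.differentiable (by simp) x), add_apply, mul_add]
  map_smul' c φ := by
    rw [RingHom.id_apply, smul_eq_mul, ← integral_const_mul]
    refine integral_congr_ae (ae_of_all _ fun x => ?_)
    simp only [Submodule.coe_smul, fderiv_const_smul (φ.2.1.differentiable (by simp) x),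
      smul_apply, smul_eq_mul, mul_left_comm]

variable {K : ℝ≥0∞} [μ.IsAddHaarMeasure]

lemma HasL2Increments.ofReal_weakDerivFunctional_sq_le (h : HasL2Increments μ Ω K w)
    (hw : Measurable w) (hwi : IntegrableOn w Ω μ) (hΩ : IsOpen Ω) (e : E) (φ : testFunctions Ω) :
    ENNReal.ofReal (weakDerivFunctional hwi e φ ^ 2) ≤
      ENNReal.ofReal ((‖e‖ + 1) ^ (Module.finrank ℝ E + 2)) * K / μ (Metric.ball e 1) *
        ‖testFunctionsToLp Ω μ φ‖ₑ ^ 2 := by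
  have hmain := h.indicator.measure_ball_mul_integral_mul_fderiv_sq_le
    (hw.indicator hΩ.measurableSet) (hwi.integrable_indicator hΩ.measurableSet) hΩ
    (contDiff_one_of_mem_testFunctions φ.2) φ.2.2.1 φ.2.2.2 e
  have hrestrict : ∫ x, Ω.indicator w x * fderiv ℝ φ.1 x e ∂μ = weakDerivFunctional hwi e φ := by
    simp_rw [← indicator_mul_left Ω w fun x => fderiv ℝ φ.1 x e]
    exact integral_indicator hΩ.measurableSet
  have hball : μ (Metric.ball e 1) ≠ 0 := (Metric.measure_ball_pos μ e one_pos).ne'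
  have hnorm : ‖testFunctionsToLp Ω μ φ‖ₑ = eLpNorm φ.1 2 (μ.restrict Ω) :=
    Lp.enorm_toLp (memLp_of_mem_testFunctions φ.2)
  rw [hrestrict, lintegral_ofReal_sq_eq_eLpNorm_sq] at hmain
  rw [hnorm, ← ENNReal.mul_div_right_comm,
    ENNReal.le_div_iff_mul_le (Or.inl hball) (Or.inl measure_ball_lt_top.ne), mul_comm]
  exact hmain

lemma HasL2Increments.exists_weakDeriv (h : HasL2Increments μ Ω K w) (hK : K ≠ ∞)
    (hw : Measurable w) (hwi : IntegrableOn w Ω μ) (hΩ : IsOpen Ω) (e : E) :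
    ∃ g : E → ℝ, Measurable g ∧ MemLp g 2 (μ.restrict Ω) ∧ ∀ φ ∈ testFunctions Ω,
      ∫ x in Ω, w x * fderiv ℝ φ x e ∂μ = -∫ x in Ω, g x * φ x ∂μ := by
  have hball : μ (Metric.ball e 1) ≠ 0 := (Metric.measure_ball_pos μ e one_pos).ne'
  obtain ⟨G, hG⟩ := exists_inner_eq_of_ofReal_sq_le (by finiteness)
    (h.ofReal_weakDerivFunctional_sq_le hw hwi hΩ e)
  obtain ⟨g, hg, hGg⟩ := Lp.aestronglyMeasurable G
  refine ⟨-g, hg.measurable.neg, ((memLp_congr_ae hGg).1 (Lp.memLp G)).neg, fun φ hφ => ?_⟩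
  have hrepr : ∫ x in Ω, w x * fderiv ℝ φ x e ∂μ = inner ℝ G (testFunctionsToLp Ω μ ⟨φ, hφ⟩) :=
    hG ⟨φ, hφ⟩
  rw [hrepr, L2.inner_def, ← integral_neg]
  refine integral_congr_ae ?_
  filter_upwards [(memLp_of_mem_testFunctions hφ).coeFn_toLp, hGg] with x hφx hgx
  change inner ℝ (G x) ((memLp_of_mem_testFunctions hφ).toLp φ x) = _
  rw [hφx, hgx, Pi.neg_apply, neg_mul, neg_neg, Real.inner_apply]

end Riesz

section Extraction

lemma exists_strictMono_seq_of_mapClusterPt {ι Y : Type*} [LinearOrder ι] [NoMaxOrder ι]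
    [Nonempty ι] [(atTop : Filter ι).IsCountablyGenerated] [TopologicalSpace Y]
    [FirstCountableTopology Y] {f : ι → Y} {y : Y} (h : MapClusterPt y atTop f) :
    ∃ k : ℕ → ι, StrictMono k ∧ Tendsto k atTop atTop ∧ Tendsto (f ∘ k) atTop (𝓝 y) := by
  have hne : NeBot (comap f (𝓝 y) ⊓ atTop) := neBot_inf_comap_iff_map'.2 h
  obtain ⟨k, hk⟩ := exists_seq_tendsto (comap f (𝓝 y) ⊓ atTop)
  obtain ⟨hky, hktop⟩ := tendsto_inf.1 hk
  obtain ⟨m, hm, hkm⟩ := strictMono_subseq_of_tendsto_atTop hktop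
  exact ⟨k ∘ m, hkm, hktop.comp hm.tendsto_atTop,
    (tendsto_comap_iff.1 hky).comp hm.tendsto_atTop⟩

lemma tendsto_integral_sq_zero {X ι : Type*} [MeasurableSpace X] {μ : Measure X} {l : Filter ι}
    {f : ι → X → ℝ} (hf : ∀ i, AEStronglyMeasurable (f i) μ)
    (h : Tendsto (fun i => eLpNorm (f i) 2 μ) l (𝓝 0)) :
    Tendsto (fun i => ∫ x, f i x ^ 2 ∂μ) l (𝓝 0) := by
  have hsq : ∀ i, ∫ x, f i x ^ 2 ∂μ = (eLpNorm (f i) 2 μ ^ 2).toReal := fun i => by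
    rw [integral_eq_lintegral_of_nonneg_ae (ae_of_all _ fun x => sq_nonneg _) ((hf i).pow 2),
      lintegral_ofReal_sq_eq_eLpNorm_sq]
  have hpow : Tendsto (fun i => eLpNorm (f i) 2 μ ^ 2) l (𝓝 0) := by
    simpa only [zero_pow two_ne_zero] using ENNReal.Tendsto.pow (n := 2) h
  simpa only [hsq, Function.comp_def, ENNReal.toReal_zero] using
    (ENNReal.tendsto_toReal ENNReal.zero_ne_top).comp hpow

end Extraction

section LipschitzDomain

variable {N : ℕ} {Ω : Set (Euc N)}

lemma semiSqOn_eq_gagliardoEnergy (s : ℝ) (u : Euc N → ℝ) :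
    semiSqOn N s Ω u = gagliardoEnergy volume s (Ω ×ˢ Ω) u := by
  simp only [semiSqOn, kern, gagliardoEnergy, finrank_euclideanSpace_fin, Measure.volume_eq_prod]

lemma semiSqOn_congr_ae {u v : Euc N → ℝ} (h : u =ᵐ[volume.restrict Ω] v) (s : ℝ) :
    semiSqOn N s Ω u = semiSqOn N s Ω v := by
  rw [semiSqOn, semiSqOn, Measure.volume_eq_prod, ← Measure.prod_restrict]
  refine lintegral_congr_ae ?_
  filter_upwards [Measure.quasiMeasurePreserving_fst.ae h,
    Measure.quasiMeasurePreserving_snd.ae h] with q hfst hsnd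
  rw [hfst, hsnd]

lemma semiSqOn_le_semiSq (s : ℝ) (u : Euc N → ℝ) : semiSqOn N s Ω u ≤ semiSq N s Ω u :=
  lintegral_mono_set fun _ hq => Or.inl (subset_closure hq.1)

lemma HasL2Increments.memH1 {K : ℝ≥0∞} {w : Euc N → ℝ} (h : HasL2Increments volume Ω K w)
    (hK : K ≠ ∞) (hw : Measurable w) (hwi : IntegrableOn w Ω) (hw2 : MemLp w 2 (volume.restrict Ω))
    (hΩ : IsOpen Ω) : memH1 N Ω w := by
  choose g hg hg2 hgw using fun i : Fin N =>
    h.exists_weakDeriv hK hw hwi hΩ (EuclideanSpace.single i 1)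
  have hsq : ∀ f : Euc N → ℝ, MemLp f 2 (volume.restrict Ω) → l2sq N Ω f < ∞ := fun f hf =>
    (memLp_two_iff_lintegral_ofReal_sq_lt_top hf.1).1 hf
  have hnorm : ∀ x, ENNReal.ofReal (‖WithLp.toLp 2 fun i => g i x‖ ^ 2) =
      ∑ i, ENNReal.ofReal (g i x ^ 2) := fun x => by
    rw [EuclideanSpace.real_norm_sq_eq, ENNReal.ofReal_sum_of_nonneg fun i _ => sq_nonneg _]
  refine ⟨hw, hsq w hw2, fun x => WithLp.toLp 2 fun i => g i x,
    (WithLp.measurable_toLp 2 _).comp (measurable_pi_lambda _ hg), ?_,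
    fun φ hφ hφc hφΩ i => hgw i φ ⟨hφ, hφc, hφΩ⟩⟩
  simp only [hnorm]
  rw [lintegral_finsetSum _ fun i _ => by have := hg i; fun_prop]
  exact ENNReal.sum_lt_top.2 fun i _ => hsq (g i) (hg2 i)

variable [Nonempty (Fin N)] {ι : Type*} {s₀ : ℝ} {C : ℝ≥0∞} {σ : ι → ℝ} {u : ι → Euc N → ℝ}

lemma BBMBounded.cauchyModConst (h : BBMBounded volume s₀ C σ u Ω) (𝓕 : Ultrafilter ι)
    (hs₀ : 0 < s₀) (hC : C ≠ ∞) (hΩ : IsLipschitzDomain N Ω) :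
    CauchyModConst 𝓕 volume u Ω := by
  obtain ⟨hopen, hbdd, hconn, hgraph⟩ := hΩ
  refine cauchyModConst_of_isConnected h.measurable hopen hconn hbdd.isCompact_closure
    hbdd.measure_lt_top.ne fun x hx => ?_
  by_cases hxΩ : x ∈ Ω
  · exact h.exists_cauchyModConst_of_mem 𝓕 hs₀ hC hopen hxΩ
  · obtain ⟨e, he, r, hr, L, f, hf, hrepr⟩ := hgraph x (hopen.frontier_eq ▸ ⟨hx, hxΩ⟩)
    refine h.exists_cauchyModConst_of_epigraph 𝓕 hs₀ hC hopen (ℓ := innerSL ℝ e) (e := e) ?_ hf hr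
      fun y hy => ?_
    · rw [innerSL_apply_apply, real_inner_self_eq_norm_sq, he, one_pow]
    · rw [innerSL_apply_apply, real_inner_comm]
      exact hrepr y hy

lemma BBMBounded.exists_memH1_tendsto_eLpNorm (h : BBMBounded volume s₀ C σ u Ω)
    (𝓕 : Ultrafilter ι) (hs₀ : 0 < s₀) (hC : C ≠ ∞) (hΩ : IsLipschitzDomain N Ω)
    (hσ : Tendsto σ 𝓕 (𝓝 1)) (hu : ∀ i, MemLp (u i) 2 (volume.restrict Ω))
    (hmean : ∀ i, ∫ x in Ω, u i x = 0) :
    ∃ w, memH1 N Ω w ∧ ∫ x in Ω, w x = 0 ∧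
      Tendsto (fun i => eLpNorm (u i - w) 2 (volume.restrict Ω)) 𝓕 (𝓝 0) := by
  have hfin : volume Ω ≠ ∞ := hΩ.2.1.measure_lt_top.ne
  have : IsFiniteMeasure (volume.restrict Ω) := isFiniteMeasure_restrict.2 hfin
  obtain ⟨w, hw, hw2, hw0, hlim⟩ := (h.cauchyModConst 𝓕 hs₀ hC hΩ).exists_tendsto_eLpNorm
    (hΩ.1.measure_pos volume hΩ.2.2.1.nonempty).ne' hfin h.measurable hu hmean
  have hincr := h.hasL2Increments_of_tendsto hs₀ hC hfin hσ hw hlim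
  exact ⟨w, hincr.memH1 (by finiteness) hw (hw2.integrable one_le_two) hw2 hΩ.1, hw0, hlim⟩

end LipschitzDomain

theorem statement8_general {N : ℕ} (hN : 0 < N) {Ω : Set (Euc N)} (hΩ : IsLipschitzDomain N Ω)
    {s₀ : ℝ} (hs₀ : s₀ ∈ Ioo (0 : ℝ) 1) {u : ℝ → Euc N → ℝ}
    (hu : ∀ s ∈ Ioo s₀ 1, memL20 N Ω (u s)) {C : ℝ≥0∞} (hC : C ≠ ∞)
    (hbd : ∀ s ∈ Ioo s₀ 1, ENNReal.ofReal (1 - s) * semiSqOn N s Ω (u s) ≤ C) :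
    ∃ sk : ℕ → ℝ, StrictMono sk ∧ (∀ k, sk k ∈ Ioo s₀ 1) ∧ Tendsto sk atTop (𝓝 1) ∧
      ∃ w : Euc N → ℝ, memH1 N Ω w ∧ (∫ x in Ω, w x) = 0 ∧
        Tendsto (fun k => ∫ x in Ω, (u (sk k) x - w x) ^ 2) atTop (𝓝 0) := by
  have : Nonempty (Fin N) := ⟨⟨0, hN⟩⟩
  have : Nonempty (Ioo s₀ 1) := nonempty_Ioo_subtype hs₀.2
  have : IsFiniteMeasure (volume.restrict Ω) :=
    isFiniteMeasure_restrict.2 hΩ.2.1.measure_lt_top.ne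
  have hL2 : ∀ s : Ioo s₀ 1, MemLp (u s) 2 (volume.restrict Ω) := fun s =>
    (memLp_two_iff_lintegral_ofReal_sq_lt_top (hu s s.2).1.aestronglyMeasurable).2 (hu s s.2).2.1
  have hB : BBMBounded volume s₀ C (fun s : Ioo s₀ 1 => (s : ℝ)) (fun s => u s) Ω :=
    { measurable := fun s => (hu s s.2).1
      integrableOn := fun s => (hL2 s).integrable one_le_two
      exponent_mem := fun s => s.2
      energy_le := fun s => semiSqOn_eq_gagliardoEnergy (s : ℝ) (u s) ▸ hbd s s.2 }
  have hone : Tendsto (Subtype.val : Ioo s₀ 1 → ℝ) atTop (𝓝 1) :=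
    (map_coe_Ioo_atTop hs₀.2).le.trans nhdsWithin_le_nhds
  obtain ⟨w, hw, hw0, hlim⟩ := hB.exists_memH1_tendsto_eLpNorm (Ultrafilter.of atTop) hs₀.1 hC hΩ
    (hone.mono_left (Ultrafilter.of_le _)) hL2 fun s => (hu s s.2).2.2
  obtain ⟨k, hk, hktop, hklim⟩ := exists_strictMono_seq_of_mapClusterPt
    (hlim.mapClusterPt.mono (Ultrafilter.of_le _))
  refine ⟨fun j => k j, hk, fun j => (k j).2, hone.comp hktop, w, hw, hw0, ?_⟩
  exact tendsto_integral_sq_zero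
    (fun j => ((hu _ (k j).2).1.sub hw.1).aestronglyMeasurable) hklim

/-- Lemma 3.2: a family with uniformly bounded scaled seminorms of the
`s`-minimal extensions is relatively compact in `L²(Ω)`, with limit in `H¹(Ω) ∩ L²₀(Ω)`. -/
theorem statement8 (N : ℕ) (hN : 2 ≤ N) (Ω : Set (Euc N)) (hΩ : IsLipschitzDomain N Ω)
    (s₀ : ℝ) (hs₀ : s₀ ∈ Set.Ioo (0 : ℝ) 1)
    (u ut : ℝ → Euc N → ℝ)
    (hu : ∀ s ∈ Set.Ioo s₀ 1, memHsOn N s Ω (u s) ∧ (∫ x in Ω, u s x) = 0)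
    (hut : ∀ s ∈ Set.Ioo s₀ 1, memHs N s Ω (ut s) ∧ ut s =ᵐ[volume.restrict Ω] u s ∧
      ∀ v : Euc N → ℝ, memHs N s Ω v → v =ᵐ[volume.restrict Ω] u s →
        semiSq N s Ω (ut s) ≤ semiSq N s Ω v)
    (C : ℝ) (hC : 0 < C)
    (hbd : ∀ s ∈ Set.Ioo s₀ 1,
      ENNReal.ofReal (1 - s) * semiSq N s Ω (ut s) ≤ ENNReal.ofReal C) :
    ∃ sk : ℕ → ℝ, StrictMono sk ∧ (∀ k, sk k ∈ Set.Ioo s₀ 1) ∧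
      Filter.Tendsto sk Filter.atTop (nhds 1) ∧
      ∃ w : Euc N → ℝ, memH1 N Ω w ∧ (∫ x in Ω, w x) = 0 ∧
        Filter.Tendsto (fun k => ∫ x in Ω, (u (sk k) x - w x) ^ 2)
          Filter.atTop (nhds 0) := by
  have hgag : ∀ s ∈ Ioo s₀ 1, semiSqOn N s Ω (u s) ≤ semiSq N s Ω (ut s) := fun s hs =>
    (semiSqOn_congr_ae (hut s hs).2.1 s).symm.trans_le (semiSqOn_le_semiSq s (ut s))
  exact statement8_general (by lia) hΩ hs₀
    (fun s hs => ⟨(hu s hs).1.1, (hu s hs).1.2.1, (hu s hs).2⟩) ENNReal.ofReal_ne_top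
    fun s hs => (mul_le_mul_right (hgag s hs) _).trans (hbd s hs)

end FracNeumann
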